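/- For every integer k ≥ 2, every integer m ≥ 1 and every real 0 < δ ≤ 1 there exists an integer N with the following property: if L is a finite subset of ℕ with |L| ≥ N and A is a set of words over k satisfying |A ∩ [k]^n| ≥ δ k^n for every n ∈ L, then there exist a word c over k and left variable words w_0,…,w_{m−1} over k such that the set {c} ∪ {c⌢w_0(a_0)⌢···⌢w_n(a_n) : 0 ≤ n ≤ m−1 and a_0,…,a_n ∈ [k]} is contained in A. -/

import Mathlib

/-- A word over `k`: a finite sequence with values in `[k]`. -/
abbrev Word (k : ℕ) := List (Fin k)

/-- A "possibly variable" letter sequence: `none` plays the role of the variable `v`. -/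
abbrev VWord (k : ℕ) := List (Option (Fin k))

/-- Substitution of the letter `a` for every occurrence of the variable. -/
def subst {k : ℕ} (w : VWord k) (a : Fin k) : Word k := w.map (fun o => o.getD a)

/-- `w` is a left variable word: its leftmost letter is the variable `v`. -/
def IsLeftVar {k : ℕ} (w : VWord k) : Prop := w.head? = some none

/-- The word `c ⌢ w₀(a₀) ⌢ ⋯ ⌢ wₙ(aₙ)`. -/
def csWord {k : ℕ} (c : Word k) (ws : ℕ → VWord k) (n : ℕ) (a : ℕ → Fin k) : Word k :=
  c ++ ((List.range (n + 1)).map fun i => subst (ws i) (a i)).flatten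

/-- The set `{c} ∪ {c ⌢ w₀(a₀) ⌢ ⋯ ⌢ wₙ(aₙ) : 0 ≤ n ≤ m-1, a₀,…,aₙ ∈ [k]}`. -/
def csSet {k : ℕ} (c : Word k) (m : ℕ) (ws : ℕ → VWord k) : Set (Word k) :=
  insert c {x | ∃ n < m, ∃ a : ℕ → Fin k, x = csWord c ws n a}

open Finset BigOperators

set_option linter.all false

/-! ### Embeddings -/

def wext {k : ℕ} : (ℕ → VWord k) → List (Fin k) → List (Fin k)
  | _, [] => []
  | w, a :: x => subst (w 0) a ++ wext (fun i => w (i + 1)) x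

def extV {k : ℕ} : (ℕ → VWord k) → VWord k → VWord k
  | _, [] => []
  | w, o :: x => (w 0).map (fun l => l.or o) ++ extV (fun i => w (i + 1)) x

def compW {k : ℕ} : (ℕ → VWord k) → (ℕ → VWord k) → ℕ → VWord k
  | w, w', 0 => extV w (w' 0)
  | w, w', n + 1 => compW (fun i => w (i + (w' 0).length)) (fun i => w' (i + 1)) n

theorem subst_length {k : ℕ} (w : VWord k) (a : Fin k) : (subst w a).length = w.length := by
  simp [subst]

theorem wext_append {k : ℕ} (w : ℕ → VWord k) (x y : List (Fin k)) :
    wext w (x ++ y) = wext w x ++ wext (fun i => w (i + x.length)) y := by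
  induction x generalizing w with
  | nil => simp [wext]
  | cons a x ih => simp [wext, ih, Nat.add_assoc, Nat.add_comm]

theorem subst_extV {k : ℕ} (w : ℕ → VWord k) (v : VWord k) (a : Fin k) :
    subst (extV w v) a = wext w (subst v a) := by
  induction v generalizing w with
  | nil => simp [extV, wext, subst]
  | cons o v ih =>
    have := ih (fun i => w (i + 1))
    simp only [subst] at this
    simp only [subst, extV, List.map_append, this, List.map_cons, wext, List.map_map]
    congr 1
    apply List.map_congr_left
    intro l _
    cases l <;> simp

theorem wext_ext {k : ℕ} (w w' : ℕ → VWord k) (x : List (Fin k)) :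
    wext w (wext w' x) = wext (compW w w') x := by
  induction x generalizing w w' with
  | nil => simp [wext]
  | cons a x ih =>
    simp only [wext, wext_append, ih, subst_length, compW, subst_extV]

theorem isLeftVar_extV {k : ℕ} {w : ℕ → VWord k} (h : ∀ n, IsLeftVar (w n)) {v : VWord k}
    (hv : IsLeftVar v) : IsLeftVar (extV w v) := by
  cases v with
  | nil => simp [IsLeftVar] at hv
  | cons o v =>
    have h0 := h 0
    simp only [IsLeftVar, List.head?_cons, Option.some.injEq] at hv
    subst hv
    unfold IsLeftVar at *
    cases hw : w 0 with
    | nil => rw [hw] at h0; simp at h0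
    | cons l t => rw [hw] at h0; simp at h0; simp [extV, hw, h0]

theorem isLeftVar_compW {k : ℕ} {w w' : ℕ → VWord k} (h : ∀ n, IsLeftVar (w n))
    (h' : ∀ n, IsLeftVar (w' n)) (n : ℕ) : IsLeftVar (compW w w' n) := by
  induction n generalizing w w' with
  | zero => exact isLeftVar_extV h (h' 0)
  | succ n ih => exact ih (fun i => h _) (fun i => h' _)

def IsEmb {k : ℕ} (Φ : List (Fin k) → List (Fin k)) : Prop :=
  ∃ c w, (∀ n, IsLeftVar (w n)) ∧ ∀ x, Φ x = c ++ wext w x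

theorem IsEmb.comp {k : ℕ} {Φ Ψ : List (Fin k) → List (Fin k)} (h : IsEmb Φ) (h' : IsEmb Ψ) :
    IsEmb (fun x => Φ (Ψ x)) := by
  obtain ⟨c, w, hw, hΦ⟩ := h
  obtain ⟨c', w', hw', hΨ⟩ := h'
  refine ⟨c ++ wext w c', compW (fun i => w (i + c'.length)) w',
    isLeftVar_compW (fun i => hw _) hw', fun x => ?_⟩
  show Φ (Ψ x) = _
  rw [hΦ, hΨ, wext_append, wext_ext, List.append_assoc]

theorem wext_id {k : ℕ} (x : List (Fin k)) : wext (fun _ => [none]) x = x := by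
  induction x with
  | nil => simp [wext]
  | cons a x ih => simp [wext, ih, subst]

theorem isEmb_pre_append {k : ℕ} (p : List (Fin k)) : IsEmb (fun x => p ++ x) :=
  ⟨p, fun _ => [none], fun _ => rfl, fun x => by rw [wext_id]⟩

theorem isEmb_id {k : ℕ} : IsEmb (fun x : List (Fin k) => x) :=
  isEmb_pre_append []

/-! ### Truncations of words indexed by linear orders -/

section TR
variable {P : Type*} [LinearOrder P] [Fintype P] {α : Type*}

def tr (z : P → α) (t : P) : List α := ((univ.filter (· < t)).sort).map z

theorem tr_length (z : P → α) (t : P) : (tr z t).length = #{p : P | p < t} := by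
  simp [tr]

theorem tr_congr {z z' : P → α} {t : P} : tr z t = tr z' t ↔ ∀ p < t, z p = z' p := by
  simp [tr, List.map_inj_left]

theorem card_lt_strictMono : StrictMono (fun t : P => #{p : P | p < t}) := by
  intro t t' h
  apply Finset.card_lt_card
  rw [Finset.ssubset_iff_of_subset]
  · exact ⟨t, by simp [h]⟩
  · intro p hp; simp at hp ⊢; exact hp.trans h

theorem tr_index {z z' : P → α} {t t' : P} (h : tr z t = tr z' t') : t = t' := by
  have := congrArg List.length h
  rw [tr_length, tr_length] at this
  exact card_lt_strictMono.injective this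

theorem tr_map {β : Type*} (f : α → β) (z : P → α) (t : P) :
    (tr z t).map f = tr (fun p => f (z p)) t := by
  simp [tr, Function.comp_def]

theorem sort_unique {l : List P} {s : Finset P} (hl : l.Pairwise (· < ·))
    (h : ∀ p, p ∈ l ↔ p ∈ s) : s.sort = l := by
  apply List.Perm.eq_of_pairwise' (r := (· ≤ ·))
  · exact Finset.pairwise_sort _ _
  · exact hl.imp le_of_lt
  · rw [List.perm_ext_iff_of_nodup (Finset.sort_nodup _ _) (hl.imp ne_of_lt)]
    intro a; simp [h]

theorem tr_append (z : P → α) {t t' : P} (h : t ≤ t') :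
    tr z t' = tr z t ++ ((univ.filter (fun p => t ≤ p ∧ p < t')).sort).map z := by
  rw [tr, tr, ← List.map_append]
  congr 1
  apply sort_unique
  · rw [List.pairwise_append]
    refine ⟨(Finset.sortedLT_sort _).pairwise, (Finset.sortedLT_sort _).pairwise, ?_⟩
    intro a ha b hb
    simp at ha hb
    exact ha.trans_le hb.1
  · intro p
    simp
    constructor
    · rintro (h1 | h1)
      · exact h1.trans_le h
      · exact h1.2
    · intro h1
      by_cases h2 : p < t
      · exact Or.inl h2
      · exact Or.inr ⟨not_lt.mp h2, h1⟩

theorem seg_cons {t t' : P} (h : t < t') :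
    (univ.filter (fun p => t ≤ p ∧ p < t')).sort =
      t :: (univ.filter (fun p => t < p ∧ p < t')).sort := by
  apply sort_unique
  · rw [List.pairwise_cons]
    refine ⟨?_, (Finset.sortedLT_sort _).pairwise⟩
    intro a ha; simp at ha; exact ha.1
  · intro p
    simp
    constructor
    · rintro (rfl | h1)
      · exact ⟨le_rfl, h⟩
      · exact ⟨h1.1.le, h1.2⟩
    · rintro ⟨h1, h2⟩
      rcases h1.eq_or_lt with h3 | h3
      · exact Or.inl h3.symm
      · exact Or.inr ⟨h3, h2⟩

theorem tr_orderIso {Q : Type*} [LinearOrder Q] [Fintype Q] (e : Q ≃o P) (z : P → α) (t : Q) :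
    tr z (e t) = tr (fun q => z (e q)) t := by
  have : (univ.filter (· < e t)).sort = ((univ.filter (· < t)).sort).map e := by
    apply sort_unique
    · rw [List.pairwise_map]
      exact (Finset.sortedLT_sort _).pairwise.imp (fun h => e.strictMono h)
    · intro p
      simp
      constructor
      · rintro ⟨a, ha, rfl⟩; exact e.strictMono ha
      · intro h; exact ⟨e.symm p, by rwa [OrderIso.symm_apply_lt], by simp⟩
  rw [tr, this, tr, List.map_map]; rfl

theorem tr_fin {n : ℕ} (z : Fin n → α) (t : Fin n) :
    tr z t = List.ofFn (fun i : Fin t => z (Fin.castLE t.2.le i)) := by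
  have : (univ.filter (· < t)).sort = List.ofFn (fun i : Fin t => Fin.castLE t.2.le i) := by
    apply sort_unique
    · rw [List.pairwise_ofFn]
      intro i j h; exact h
    · intro p
      simp [List.mem_ofFn]
      constructor
      · rintro ⟨i, rfl⟩; exact i.2
      · intro h; exact ⟨⟨p, h⟩, rfl⟩
  rw [tr, this, List.map_ofFn]; rfl

theorem tr_fin_length {n : ℕ} (z : Fin n → α) (t : Fin n) : (tr z t).length = t := by
  rw [tr_fin]; simp

theorem tr_fin_zero {n : ℕ} (z : Fin n → α) (t : Fin n) (h : (t : ℕ) = 0) : tr z t = [] := by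
  apply List.eq_nil_of_length_eq_zero; rw [tr_fin_length, h]

theorem tr_fin_succ {n : ℕ} (z : Fin n → α) {j : ℕ} (h : j + 1 < n) :
    tr z ⟨j + 1, h⟩ = tr z ⟨j, by omega⟩ ++ [z ⟨j, by omega⟩] := by
  rw [tr_fin, tr_fin]
  simp only
  rw [List.ofFn_succ']
  simp
  rfl

/-- every list of the right length is a truncation -/
theorem exists_tr [Nonempty α] (l : List α) (t : P) (h : l.length = #{p : P | p < t}) :
    ∃ z : P → α, tr z t = l := by
  classical
  let e : Fin (Fintype.card P) ≃o P := Fintype.orderIsoFinOfCardEq P rfl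
  obtain ⟨d⟩ := ‹Nonempty α›
  refine ⟨fun p => l.getD (e.symm p) d, ?_⟩
  obtain ⟨j, rfl⟩ := e.surjective t
  have hl := tr_length (fun q : P => q) (e j)
  rw [tr_orderIso e, tr_fin_length] at hl
  rw [tr_orderIso e, tr_fin]
  rw [← hl] at h
  apply List.ext_getElem
  · simp [h]
  · intro i h1 h2
    simp [h2]

end TR

open Finset BigOperators
set_option linter.all false

/-! ### Planting -/

section PL
variable {B P α : Type*}

open Classical in
noncomputable def pl (σ : B → P) (s : Finset B) (x : B → α) (y : P → α) : P → α :=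
  fun p => if h : ∃ b, b ∈ s ∧ σ b = p then x h.choose else y p

theorem pl_mem {σ : B → P} (hσ : Function.Injective σ) {s : Finset B} (x : B → α) (y : P → α)
    {b : B} (hb : b ∈ s) : pl σ s x y (σ b) = x b := by
  have h : ∃ b', b' ∈ s ∧ σ b' = σ b := ⟨b, hb, rfl⟩
  rw [pl, dif_pos h]
  congr 1
  exact hσ h.choose_spec.2

theorem pl_not {σ : B → P} {s : Finset B} (x : B → α) (y : P → α)
    {p : P} (hp : ∀ b ∈ s, σ b ≠ p) : pl σ s x y p = y p := by
  rw [pl, dif_neg]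
  rintro ⟨b, hb, h⟩; exact hp b hb h

theorem pl_map {β : Type*} (f : α → β) (σ : B → P) (s : Finset B) (x : B → α) (y : P → α) (p : P) :
    f (pl σ s x y p) = pl σ s (fun b => f (x b)) (fun p => f (y p)) p := by
  unfold pl
  split_ifs <;> rfl

theorem pl_insert [DecidableEq P] [DecidableEq B] {σ : B → P} (hσ : Function.Injective σ)
    {s : Finset B} (x : B → α) (y : P → α) (b : B) :
    pl σ (insert b s) x y = Function.update (pl σ s x y) (σ b) (x b) := by
  funext p
  by_cases h : p = σ b
  · subst h; rw [Function.update_self, pl_mem hσ _ _ (Finset.mem_insert_self _ _)]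
  · rw [Function.update_of_ne h]
    by_cases h' : ∃ b' ∈ s, σ b' = p
    · obtain ⟨b', hb', rfl⟩ := h'
      rw [pl_mem hσ _ _ hb', pl_mem hσ _ _ (Finset.mem_insert_of_mem hb')]
    · push Not at h'
      rw [pl_not _ _ h', pl_not]
      intro b' hb'
      rcases Finset.mem_insert.1 hb' with rfl | h2
      · exact Ne.symm h
      · exact h' _ h2

theorem pl_empty (σ : B → P) (x : B → α) (y : P → α) : pl σ ∅ x y = y := by
  funext p; exact pl_not _ _ (by simp)

end PL

theorem expect_prod {X Y : Type*} [Fintype X] [Fintype Y] (f : X → Y → ℝ) :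
    𝔼 x, 𝔼 y, f x y = 𝔼 p : X × Y, f p.1 p.2 := by
  rw [← Finset.univ_product_univ, Finset.expect_product']

theorem expect_pl {B P α : Type*} [Fintype B] [Fintype P] [Fintype α] [DecidableEq B]
    [DecidableEq P] [Nonempty α] {σ : B → P} (hσ : Function.Injective σ) (s : Finset B)
    (f : (P → α) → ℝ) :
    𝔼 y : P → α, 𝔼 x : B → α, f (pl σ s x y) = 𝔼 z, f z := by
  have h1 : 𝔼 z, f z = 𝔼 y : P → α, 𝔼 x : B → α, f y := by simp
  rw [h1, expect_prod, expect_prod]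
  let ι : (P → α) × (B → α) → (P → α) × (B → α) := fun q =>
    (pl σ s q.2 q.1, fun b => if b ∈ s then q.1 (σ b) else q.2 b)
  have hι : Function.Involutive ι := by
    rintro ⟨y, x⟩
    simp only [ι, Prod.mk.injEq]
    constructor
    · funext p
      by_cases h' : ∃ b' ∈ s, σ b' = p
      · obtain ⟨b', hb', rfl⟩ := h'
        rw [pl_mem hσ _ _ hb', if_pos hb']
      · push Not at h'
        rw [pl_not _ _ h', pl_not _ _ h']
    · funext b
      split_ifs with h
      · exact pl_mem hσ _ _ h
      · rfl
  exact Fintype.expect_bijective ι hι.bijective _ _ (fun _ => rfl)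

theorem expect_update {ι β : Type*} [Fintype ι] [Fintype β] [DecidableEq ι] [Nonempty β]
    (j : ι) (f : (ι → β) → ℝ) :
    𝔼 S : ι → β, 𝔼 q : β, f (Function.update S j q) = 𝔼 S, f S := by
  have h1 : 𝔼 S, f S = 𝔼 S : ι → β, 𝔼 q : β, f S := by simp
  rw [h1, expect_prod, expect_prod]
  let ρ : (ι → β) × β → (ι → β) × β := fun q => (Function.update q.1 j q.2, q.1 j)
  have hρ : Function.Involutive ρ := by
    rintro ⟨y, x⟩
    simp [ρ]
  exact Fintype.expect_bijective ρ hρ.bijective _ _ (fun _ => rfl)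

/-! ### The measure on words -/

noncomputable def nu {α : Type*} [Fintype α] (n : ℕ) (f : List α → ℝ) : ℝ :=
  𝔼 t : Fin n, 𝔼 z : Fin n → α, f (tr z t)

theorem exists_emb {k n N : ℕ} {σ : Fin n → Fin N} (hσ : StrictMono σ) (y : Fin N → Fin k) :
    ∃ Φ : List (Fin k) → List (Fin k), IsEmb Φ ∧
      ∀ (x : Fin n → Fin k) (t : Fin n), Φ (tr x t) = tr (pl σ univ x y) (σ t) := by
  rcases Nat.eq_zero_or_pos n with rfl | hn
  · exact ⟨fun x => x, isEmb_id, fun x t => t.elim0⟩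
  let c := tr y (σ ⟨0, hn⟩)
  let w : ℕ → VWord k := fun j => if h : j + 1 < n then
    ((univ.filter (fun p => σ ⟨j, by omega⟩ ≤ p ∧ p < σ ⟨j+1, h⟩)).sort).map
      (fun p => if p = σ ⟨j, by omega⟩ then none else some (y p)) else [none]
  refine ⟨fun x => c ++ wext w x, ⟨c, w, ?_, fun x => rfl⟩, ?_⟩
  · intro j
    by_cases h : j + 1 < n
    · have : (⟨j, by omega⟩ : Fin n) < ⟨j+1, h⟩ := by simp
      simp only [w, dif_pos h, seg_cons (hσ this)]
      simp [IsLeftVar]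
    · simp only [w, dif_neg h]; rfl
  · rintro x ⟨j, hj⟩
    induction j with
    | zero =>
      rw [tr_fin_zero _ _ rfl]
      simp only [wext, List.append_nil, c]
      rw [tr_congr]
      intro p hp
      rw [pl_not]
      intro b _ hb
      rw [← hb, hσ.lt_iff_lt] at hp
      simp [Fin.lt_def] at hp
    | succ j ih =>
      have hlt : (⟨j, by omega⟩ : Fin n) < ⟨j+1, hj⟩ := by simp
      have := ih (by omega)
      simp only at this ⊢
      rw [tr_fin_succ, wext_append, ← List.append_assoc, this, tr_append _ (hσ hlt).le]
      congr 1
      simp only [wext, List.append_nil, tr_fin_length, subst, Nat.zero_add, w, dif_pos hj,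
        List.map_map]
      apply List.map_congr_left
      intro p hp
      simp only [Finset.mem_sort, Finset.mem_filter, Finset.mem_univ, true_and] at hp
      simp only [Function.comp]
      split_ifs with h
      · rw [h, pl_mem hσ.injective _ _ (Finset.mem_univ _)]; rfl
      · rw [pl_not]; rfl
        intro b _ hb
        rw [← hb, hσ.le_iff_le, hσ.lt_iff_lt] at hp
        rw [← hb] at h
        apply h
        congr 1
        simp only [Fin.le_def, Fin.lt_def] at hp
        ext
        simp; omega

open Classical in
noncomputable def emb {k n N : ℕ} (σ : Fin n → Fin N) (y : Fin N → Fin k) :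
    List (Fin k) → List (Fin k) :=
  if h : StrictMono σ then (exists_emb h y).choose else fun x => x

theorem isEmb_emb {k n N : ℕ} (σ : Fin n → Fin N) (y : Fin N → Fin k) : IsEmb (emb σ y) := by
  unfold emb
  split_ifs with h
  · exact (exists_emb h y).choose_spec.1
  · exact isEmb_id

theorem emb_tr {k n N : ℕ} {σ : Fin n → Fin N} (hσ : StrictMono σ) (y : Fin N → Fin k)
    (x : Fin n → Fin k) (t : Fin n) : emb σ y (tr x t) = tr (pl σ univ x y) (σ t) := by
  unfold emb
  rw [dif_pos hσ]
  exact (exists_emb hσ y).choose_spec.2 x t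

theorem expect_win {k n N : ℕ} [NeZero k] {σ : Fin n → Fin N} (hσ : StrictMono σ)
    (f : List (Fin k) → ℝ) :
    𝔼 q, 𝔼 z : Fin N → Fin k, f (tr z (σ q)) = 𝔼 y, nu n (fun x => f (emb σ y x)) := by
  simp only [nu, emb_tr hσ]
  rw [Finset.expect_comm (s := (univ : Finset (Fin N → Fin k)))]
  refine Finset.expect_congr rfl fun q _ => ?_
  exact (expect_pl hσ.injective univ (fun z => f (tr z (σ q)))).symm

theorem exists_tr_of_length {α : Type*} [Nonempty α] {n : ℕ} (l : List α) (h : l.length < n) :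
    ∃ z : Fin n → α, tr z ⟨l.length, h⟩ = l := by
  apply exists_tr
  rw [← tr_length (fun p => p), tr_fin_length]

theorem conv {α : Type*} [Nonempty α] {n : ℕ} (g : Fin n → (Fin n → α) → ℝ)
    (hg : ∀ t z z', (∀ p < t, z p = z' p) → g t z = g t z') :
    ∃ gL : List α → ℝ, (∀ t z, gL (tr z t) = g t z) ∧ ∀ l, n ≤ l.length → gL l = 0 := by
  classical
  refine ⟨fun l => if h : l.length < n then g ⟨l.length, h⟩ (exists_tr_of_length l h).choose
    else 0, ?_, ?_⟩
  · intro t z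
    have h : (tr z t).length < n := by rw [tr_fin_length]; exact t.2
    simp only [dif_pos h]
    have e : (⟨(tr z t).length, h⟩ : Fin n) = t := by ext; simp [tr_fin_length]
    have h2 := (exists_tr_of_length (tr z t) h).choose_spec
    rw [hg _ _ z]
    · rw [e]
    · generalize (exists_tr_of_length (tr z t) h).choose = c at h2 ⊢
      rw [e] at h2 ⊢
      exact tr_congr.1 h2
  · intro l h
    simp only [dif_neg (not_lt.2 h)]

/-! ### Positions in blocks -/

def pos {m n : ℕ} (b : Fin m) (q : Fin n) : Fin (m * n) := finProdFinEquiv (b, q)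

theorem pos_val {m n : ℕ} (b : Fin m) (q : Fin n) : (pos b q : ℕ) = q + n * b := rfl

theorem pos_lt_pos {m n : ℕ} {b b' : Fin m} {q q' : Fin n} :
    pos b q < pos b' q' ↔ b < b' ∨ b = b' ∧ q < q' := by
  rw [Fin.lt_def, pos_val, pos_val]
  rcases lt_trichotomy b b' with h | rfl | h
  · simp only [h, true_or, iff_true]
    have h1 : (b : ℕ) + 1 ≤ b' := h
    have := Nat.mul_le_mul_left n h1
    have := q.2
    rw [Nat.mul_add] at *
    omega
  · simp
  · simp only [not_lt.2 h.le, h.ne', false_and, or_false, iff_false]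
    have h1 : (b' : ℕ) + 1 ≤ b := h
    have := Nat.mul_le_mul_left n h1
    have := q'.2
    rw [Nat.mul_add] at *
    omega

theorem pos_inj {m n : ℕ} {b b' : Fin m} {q q' : Fin n} :
    pos b q = pos b' q' ↔ b = b' ∧ q = q' := by
  simp [pos]

theorem exists_pos {m n : ℕ} (t : Fin (m * n)) : ∃ b q, t = pos b q :=
  ⟨(finProdFinEquiv.symm t).1, (finProdFinEquiv.symm t).2, (Equiv.apply_symm_apply _ _).symm⟩

theorem expect_blk {m n : ℕ} (f : Fin (m * n) → ℝ) :
    𝔼 t, f t = 𝔼 b, 𝔼 q, f (pos b q) := by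
  rw [expect_prod]
  exact (Fintype.expect_equiv finProdFinEquiv _ _ (fun _ => rfl)).symm

theorem pos_strictMono {m n : ℕ} (b : Fin m) : StrictMono (fun q : Fin n => pos b q) := by
  intro q q' h; exact pos_lt_pos.2 (Or.inr ⟨rfl, h⟩)

theorem pos_sel_strictMono {m n : ℕ} (S : Fin m → Fin n) :
    StrictMono (fun b => pos b (S b)) := by
  intro q q' h; exact pos_lt_pos.2 (Or.inl h)

theorem win_le {k n N : ℕ} [NeZero k] {σ : Fin n → Fin N} (hσ : StrictMono σ)
    {f : List (Fin k) → ℝ} {s : ℝ} (h : ∀ Φ, IsEmb Φ → nu n (fun x => f (Φ x)) ≤ s) :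
    𝔼 q, 𝔼 z : Fin N → Fin k, f (tr z (σ q)) ≤ s := by
  rw [expect_win hσ]
  exact Finset.expect_le (univ_nonempty) (fun y _ => h _ (isEmb_emb _ _))

theorem nu_mul_le {k n r : ℕ} [NeZero k] [NeZero r]
    {f : List (Fin k) → ℝ} {s : ℝ} (h : ∀ Φ, IsEmb Φ → nu n (fun x => f (Φ x)) ≤ s) :
    nu (r * n) f ≤ s := by
  unfold nu
  rw [expect_blk]
  exact Finset.expect_le (univ_nonempty) (fun b _ => win_le (pos_strictMono b) h)

theorem nu_mul_le' {k n r : ℕ} [NeZero k] [NeZero r]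
    {f : List (Fin k) → ℝ} {s : ℝ} (h : ∀ Φ, IsEmb Φ → nu n (fun x => f (Φ x)) ≤ s) :
    ∀ Φ, IsEmb Φ → nu (r * n) (fun x => f (Φ x)) ≤ s := by
  intro Φ hΦ
  refine nu_mul_le (f := fun x => f (Φ x)) (fun Ψ hΨ => h _ (hΦ.comp hΨ))

open Finset BigOperators
set_option linter.all false

theorem expect_plant_eq {P : Type*} [Fintype P] [DecidableEq P] {K : ℕ} [NeZero K]
    (h : (P → Fin K) → ℝ) (p : P) (c : Fin K) :
    𝔼 y, h (Function.update y p c) = 𝔼 y : P → Fin K, (if y p = c then (K : ℝ) else 0) * h y := by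
  rw [← expect_update p (fun y : P → Fin K => (if y p = c then (K : ℝ) else 0) * h y)]
  refine Finset.expect_congr rfl fun y _ => ?_
  simp only [Function.update_self]
  rw [Fintype.expect_eq_sum_div_card]
  have : (K : ℝ) ≠ 0 := by exact_mod_cast NeZero.ne K
  simp
  field_simp

theorem single_plant {P Q : Type*} [Fintype P] [DecidableEq P] [Fintype Q] [DecidableEq Q]
    [Nonempty Q] {K : ℕ} [NeZero K] {ι : Q → P} (hι : Function.Injective ι) (c : Fin K)
    {h : (P → Fin K) → ℝ} (h0 : ∀ y, 0 ≤ h y) (h1 : ∀ y, h y ≤ 1) {η : ℝ} (hη : 0 < η)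
    (hQ : (K : ℝ) ≤ η ^ 2 * Fintype.card Q) :
    𝔼 y, h y - η ≤ 𝔼 q, 𝔼 y, h (Function.update y (ι q) c) := by
  simp only [expect_plant_eq]
  set X : Q → (P → Fin K) → ℝ := fun q y => 1 - (if y (ι q) = c then (K : ℝ) else 0) with hX
  have hcard : (0 : ℝ) < Fintype.card Q := by exact_mod_cast Fintype.card_pos
  have hK1 : (1 : ℝ) ≤ K := by exact_mod_cast NeZero.one_le
  have key : 𝔼 y, (𝔼 q, X q y) ^ 2 ≤ η ^ 2 := by
    have e1 : ∀ y, (𝔼 q, X q y) ^ 2 = 𝔼 q, 𝔼 q', X q y * X q' y := by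
      intro y
      rw [sq, Finset.expect_mul]
      refine Finset.expect_congr rfl fun q _ => ?_
      rw [Finset.mul_expect]
    simp only [e1]
    rw [Finset.expect_comm]
    simp only [Finset.expect_comm (s := (univ : Finset (P → Fin K)))]
    have e2 : ∀ q q' : Q, 𝔼 y : P → Fin K, X q y * X q' y ≤ if q = q' then (K : ℝ) else 0 := by
      intro q q'
      rw [← expect_update (ι q) (fun y : P → Fin K => X q y * X q' y)]
      apply Finset.expect_le univ_nonempty
      intro y _
      split_ifs with h
      · subst h
        simp only [hX, Function.update_self]
        have : ∀ a : Fin K, (1 - (if a = c then (K : ℝ) else 0)) * (1 - (if a = c then (K : ℝ) else 0))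
            = 1 + (if a = c then ((K : ℝ)^2 - 2 * K) else 0) := by
          intro a; split_ifs <;> ring
        simp only [this]
        rw [Finset.expect_add_distrib, Fintype.expect_const, Fintype.expect_eq_sum_div_card]
        simp
        have : ((K : ℝ)^2 - 2 * K) / K = K - 2 := by
          field_simp
        rw [this]; linarith
      · have hne : ι q' ≠ ι q := fun h' => h (hι h').symm
        simp only [hX, Function.update_self, Function.update_of_ne hne]
        rw [← Finset.expect_mul, Finset.expect_sub_distrib, Fintype.expect_const,
          Fintype.expect_eq_sum_div_card]
        simp
    calc _ ≤ 𝔼 q : Q, 𝔼 q' : Q, (if q = q' then (K : ℝ) else 0) := by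
          apply Finset.expect_le_expect; intro q _
          apply Finset.expect_le_expect; intro q' _
          exact e2 q q'
      _ = K / Fintype.card Q := by
          simp [Fintype.expect_eq_sum_div_card]
          rw [NNRat.smul_def]; push_cast; field_simp
      _ ≤ η ^ 2 := by rw [div_le_iff₀ hcard]; exact hQ
  have e3 : 𝔼 q, 𝔼 y : P → Fin K, (if y (ι q) = c then (K : ℝ) else 0) * h y
      = 𝔼 y, h y - 𝔼 y, (𝔼 q, X q y) * h y := by
    rw [← Finset.expect_sub_distrib, Finset.expect_comm]
    refine Finset.expect_congr rfl fun y _ => ?_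
    simp only [hX]
    rw [Finset.expect_sub_distrib, Fintype.expect_const, ← Finset.expect_mul]; ring
  rw [e3]
  have e4 : 𝔼 y, (𝔼 q, X q y) * h y ≤ 𝔼 y, (η / 2 + 1 / (2 * η) * (𝔼 q, X q y) ^ 2) := by
    apply Finset.expect_le_expect; intro y _
    set φ := 𝔼 q, X q y
    have a1 : φ * h y ≤ |φ| := by
      calc φ * h y ≤ |φ * h y| := le_abs_self _
        _ = |φ| * h y := by rw [abs_mul, abs_of_nonneg (h0 y)]
        _ ≤ |φ| * 1 := by gcongr; exact h1 y
        _ = |φ| := mul_one _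
    have a2 : |φ| ≤ η / 2 + 1 / (2 * η) * φ ^ 2 := by
      have : η / 2 + 1 / (2 * η) * φ ^ 2 - |φ| = (η - |φ|) ^ 2 / (2 * η) := by
        field_simp
        rw [sub_sq, sq_abs]; ring
      have : 0 ≤ (η - |φ|) ^ 2 / (2 * η) := by positivity
      linarith
    linarith
  rw [Finset.expect_add_distrib, Fintype.expect_const, ← Finset.mul_expect] at e4
  have e5 : 1 / (2 * η) * 𝔼 y, (𝔼 q, X q y) ^ 2 ≤ 1 / (2 * η) * η ^ 2 := by gcongr
  have e6 : 1 / (2 * η) * η ^ 2 = η / 2 := by field_simp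
  linarith

theorem multi_plant {K m n : ℕ} [NeZero K] [NeZero n] {η : ℝ} (hη : 0 < η)
    (hn : (K : ℝ) ≤ η ^ 2 * n) (x : Fin m → Fin K) (j : Fin m)
    (h : Fin n → (Fin (m * n) → Fin K) → ℝ) (h0 : ∀ q y, 0 ≤ h q y) (h1 : ∀ q y, h q y ≤ 1)
    (s : Finset (Fin m)) (hj : j ∉ s) :
    𝔼 q, 𝔼 y, h q y - #s * η ≤
      𝔼 S : Fin m → Fin n, 𝔼 y, h (S j) (pl (fun b => pos b (S b)) s x y) := by
  induction s using Finset.induction_on with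
  | empty =>
    simp only [pl_empty]
    rw [← expect_update j (fun S : Fin m → Fin n => 𝔼 y, h (S j) y)]
    simp
  | insert b s hb ih =>
    have hjb : j ≠ b := fun e => hj (by simp [e])
    have hjs : j ∉ s := fun e => hj (by simp [e])
    have ih := ih hjs
    rw [← expect_update b (fun S : Fin m → Fin n =>
      𝔼 y, h (S j) (pl (fun b => pos b (S b)) (insert b s) x y))]
    rw [Finset.card_insert_of_notMem hb]
    have : ∀ S : Fin m → Fin n, 𝔼 y, h (S j) (pl (fun b => pos b (S b)) s x y) - η ≤
        𝔼 q, 𝔼 y, h (Function.update S b q j)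
          (pl (fun b' => pos b' (Function.update S b q b')) (insert b s) x y) := by
      intro S
      have := single_plant (Q := Fin n) (ι := fun q => pos b q) (pos_strictMono b).injective (x b)
        (h := fun y => h (S j) (pl (fun b => pos b (S b)) s x y)) (fun y => h0 _ _)
        (fun y => h1 _ _) hη (by simpa using hn)
      refine this.trans (le_of_eq ?_)
      refine Finset.expect_congr rfl fun q _ => ?_
      refine Finset.expect_congr rfl fun y _ => ?_
      rw [Function.update_of_ne hjb]
      congr 1
      have hσ := (pos_sel_strictMono S).injective
      have hσ' := (pos_sel_strictMono (Function.update S b q)).injective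
      rw [pl_insert hσ']
      simp only [Function.update_self]
      funext p
      by_cases hp : p = pos b q
      · subst hp
        rw [Function.update_self, pl_not, Function.update_self]
        intro b' hb' e
        rw [pos_inj] at e
        exact hb (e.1 ▸ hb')
      · rw [Function.update_of_ne hp]
        by_cases h' : ∃ b' ∈ s, pos b' (S b') = p
        · obtain ⟨b', hb', rfl⟩ := h'
          have hbb : b' ≠ b := fun e => hb (e ▸ hb')
          have a1 := pl_mem hσ x (Function.update y (pos b q) (x b)) hb'
          have a2 := pl_mem hσ' x y hb'
          simp only [Function.update_of_ne hbb] at a1 a2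
          rw [a1, a2]
        · push Not at h'
          rw [pl_not _ _ h', pl_not, Function.update_of_ne hp]
          intro b' hb'
          have hbb : b' ≠ b := fun e => hb (e ▸ hb')
          rw [Function.update_of_ne hbb]
          exact h' _ hb'
    have h2 := Finset.expect_le_expect (s := univ) (fun S _ => this S)
    rw [Finset.expect_sub_distrib, Fintype.expect_const] at h2
    push_cast
    linarith

theorem plant {K m n : ℕ} [NeZero K] [NeZero n] {η : ℝ} (hη : 0 < η)
    (hn : (K : ℝ) ≤ η ^ 2 * n) {f : List (Fin K) → ℝ} (h0 : ∀ l, 0 ≤ f l) (h1 : ∀ l, f l ≤ 1)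
    (x : Fin m → Fin K) (j : Fin m) :
    𝔼 q : Fin n, 𝔼 y : Fin (m * n) → Fin K, f (tr y (pos j q)) - m * η ≤
      𝔼 S : Fin m → Fin n, 𝔼 y : Fin (m * n) → Fin K,
        f (emb (fun b => pos b (S b)) y (tr x j)) := by
  have := multi_plant hη hn x j (fun q y => f (tr y (pos j q))) (fun _ _ => h0 _) (fun _ _ => h1 _)
    (univ.filter (· < j)) (by simp)
  have hc : ((#(univ.filter (· < j)) : ℕ) : ℝ) ≤ m := by
    have := Finset.card_le_univ (univ.filter (· < j))
    simp only [Fintype.card_fin] at this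
    exact_mod_cast this
  have hc' : ((#(univ.filter (· < j)) : ℕ) : ℝ) * η ≤ m * η := by gcongr
  refine (sub_le_sub_left hc' _).trans (this.trans (le_of_eq ?_))
  refine Finset.expect_congr rfl fun S _ => ?_
  refine Finset.expect_congr rfl fun y _ => ?_
  rw [emb_tr (pos_sel_strictMono S)]
  congr 1
  rw [tr_congr]
  intro p hp
  have hσ := (pos_sel_strictMono S).injective
  by_cases h' : ∃ b', pos b' (S b') = p
  · obtain ⟨b', rfl⟩ := h'
    have hb : b' < j := by
      rcases pos_lt_pos.1 hp with h | ⟨h, h2⟩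
      · exact h
      · subst h; exact absurd h2 (lt_irrefl _)
    have a1 := pl_mem hσ x y (s := univ.filter (· < j)) (b := b') (by simp [hb])
    have a2 := pl_mem hσ x y (s := univ) (b := b') (by simp)
    rw [a1, a2]
  · push Not at h'
    rw [pl_not _ _ (fun b _ => h' b), pl_not _ _ (fun b _ => h' b)]

open Finset BigOperators
set_option linter.all false

section NU
variable {α : Type*} [Fintype α] {n : ℕ} {f g : List α → ℝ}

theorem nu_mono (h : ∀ l, f l ≤ g l) : nu n f ≤ nu n g :=
  Finset.expect_le_expect fun t _ => Finset.expect_le_expect fun z _ => h _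

theorem nu_mono' (h : ∀ l, l.length < n → f l ≤ g l) : nu n f ≤ nu n g :=
  Finset.expect_le_expect fun t _ => Finset.expect_le_expect fun z _ =>
    h _ (by rw [tr_fin_length]; exact t.2)

theorem nu_congr' (h : ∀ l, l.length < n → f l = g l) : nu n f = nu n g :=
  le_antisymm (nu_mono' fun l hl => (h l hl).le) (nu_mono' fun l hl => (h l hl).ge)

theorem nu_nonneg (h : ∀ l, 0 ≤ f l) : 0 ≤ nu n f :=
  Finset.expect_nonneg fun t _ => Finset.expect_nonneg fun z _ => h _

theorem nu_add : nu n (fun l => f l + g l) = nu n f + nu n g := by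
  simp only [nu, Finset.expect_add_distrib]

theorem nu_sub : nu n (fun l => f l - g l) = nu n f - nu n g := by
  simp only [nu, Finset.expect_sub_distrib]

theorem nu_mul (c : ℝ) : nu n (fun l => c * f l) = c * nu n f := by
  simp only [nu, Finset.mul_expect]

theorem nu_const [Nonempty α] [NeZero n] (c : ℝ) : nu n (fun _ : List α => c) = c := by
  simp [nu]

theorem nu_expect {ι : Type*} (s : Finset ι) (f : ι → List α → ℝ) :
    nu n (fun l => 𝔼 i ∈ s, f i l) = 𝔼 i ∈ s, nu n (f i) := by
  simp only [nu]
  conv_rhs => rw [Finset.expect_comm]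
  refine Finset.expect_congr rfl fun t _ => ?_
  conv_lhs => rw [Finset.expect_comm]

theorem nu_sum {ι : Type*} (s : Finset ι) (f : ι → List α → ℝ) :
    nu n (fun l => ∑ i ∈ s, f i l) = ∑ i ∈ s, nu n (f i) := by
  simp only [nu]
  rw [← Finset.expect_sum_comm]
  refine Finset.expect_congr rfl fun t _ => ?_
  rw [← Finset.expect_sum_comm]

theorem nu_le_one [Nonempty α] [NeZero n] (h : ∀ l, f l ≤ 1) : nu n f ≤ 1 := by
  rw [← nu_const (α := α) (n := n) 1]; exact nu_mono h

theorem le_nu_point [DecidableEq α] [Nonempty α] (l : List α) (hl : l.length < n) :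
    1 / ((n : ℝ) * (Fintype.card α : ℝ) ^ n) ≤ nu n (fun l' => if l' = l then (1 : ℝ) else 0) := by
  unfold nu
  rw [expect_prod, Fintype.expect_eq_sum_div_card]
  simp only [Fintype.card_prod, Fintype.card_fin, Fintype.card_fun]
  push_cast
  gcongr
  obtain ⟨z, hz⟩ := exists_tr_of_length l hl
  have := Finset.single_le_sum (f := fun p : Fin n × (Fin n → α) =>
    if tr p.2 p.1 = l then (1 : ℝ) else 0) (s := univ) (fun i _ => by split_ifs <;> norm_num)
    (Finset.mem_univ (⟨l.length, hl⟩, z))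
  simpa [hz] using this

end NU

/-! ### Insensitivity -/

def rr {k : ℕ} (a : Fin k) (c : Fin (k + 1)) : Fin (k + 1) :=
  if c = Fin.last k then a.castSucc else c

theorem rr_castSucc {k : ℕ} (a b : Fin k) : rr a b.castSucc = b.castSucc := by
  simp [rr, Fin.castSucc_ne_last]

theorem exists_rr {k : ℕ} (a : Fin k) (c : Fin (k + 1)) : ∃ b : Fin k, rr a c = b.castSucc := by
  unfold rr
  split_ifs with h
  · exact ⟨a, rfl⟩
  · exact ⟨c.castPred h, by simp⟩

theorem rr_rr {k : ℕ} (a : Fin k) (c : Fin (k + 1)) : rr a (rr a c) = rr a c := by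
  obtain ⟨b, hb⟩ := exists_rr a c
  rw [hb, rr_castSucc]

theorem exists_map_rr {k : ℕ} (a : Fin k) (x : List (Fin (k + 1))) :
    ∃ y : List (Fin k), x.map (rr a) = y.map Fin.castSucc := by
  choose f hf using exists_rr a
  refine ⟨x.map f, ?_⟩
  rw [List.map_map]
  exact List.map_congr_left fun c _ => hf c

def Ins {k : ℕ} (a : Fin k) (g : List (Fin (k + 1)) → ℝ) : Prop :=
  ∀ x, g (x.map (rr a)) = g x

theorem subst_map {K : ℕ} {ρ : Fin K → Fin K} (w : VWord K) (b : Fin K)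
    (hρ : ∀ c, ρ (ρ c) = ρ c) : (subst w (ρ b)).map ρ = (subst w b).map ρ := by
  simp only [subst, List.map_map]
  apply List.map_congr_left
  intro o _
  cases o <;> simp [hρ]

theorem wext_map {K : ℕ} {ρ : Fin K → Fin K} (hρ : ∀ c, ρ (ρ c) = ρ c) (w : ℕ → VWord K)
    (x : List (Fin K)) : (wext w (x.map ρ)).map ρ = (wext w x).map ρ := by
  induction x generalizing w with
  | nil => simp
  | cons b x ih => simp only [List.map_cons, wext, List.map_append, ih, subst_map _ _ hρ]

theorem IsEmb.map {K : ℕ} {ρ : Fin K → Fin K} (hρ : ∀ c, ρ (ρ c) = ρ c)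
    {Φ : List (Fin K) → List (Fin K)} (hΦ : IsEmb Φ) (x : List (Fin K)) :
    (Φ (x.map ρ)).map ρ = (Φ x).map ρ := by
  obtain ⟨c, w, hw, h⟩ := hΦ
  rw [h, h, List.map_append, List.map_append, wext_map hρ]

theorem Ins.comp {k : ℕ} {a : Fin k} {g : List (Fin (k + 1)) → ℝ} (hg : Ins a g)
    {Φ : List (Fin (k + 1)) → List (Fin (k + 1))} (hΦ : IsEmb Φ) : Ins a (fun x => g (Φ x)) := by
  intro x
  show g (Φ _) = g (Φ x)
  rw [← hg, hΦ.map (rr_rr a), hg]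

/-! ### Extending the alphabet -/

theorem wext_cast {k : ℕ} (w : ℕ → VWord k) (x : List (Fin k)) :
    wext (fun i => (w i).map (Option.map Fin.castSucc)) (x.map Fin.castSucc)
      = (wext w x).map Fin.castSucc := by
  induction x generalizing w with
  | nil => simp [wext]
  | cons b x ih =>
    simp only [List.map_cons, wext, List.map_append, ih]
    congr 1
    simp only [subst, List.map_map]
    apply List.map_congr_left
    intro o _
    cases o <;> simp

theorem IsEmb.hat {k : ℕ} {Ψ : List (Fin k) → List (Fin k)} (h : IsEmb Ψ) :
    ∃ Ψ' : List (Fin (k + 1)) → List (Fin (k + 1)), IsEmb Ψ' ∧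
      ∀ x : List (Fin k), Ψ' (x.map Fin.castSucc) = (Ψ x).map Fin.castSucc := by
  obtain ⟨c, w, hw, h⟩ := h
  refine ⟨fun x => c.map Fin.castSucc ++ wext (fun i => (w i).map (Option.map Fin.castSucc)) x,
    ⟨_, _, ?_, fun x => rfl⟩, ?_⟩
  · intro n
    have := hw n
    unfold IsLeftVar at *
    simp [this]
  · intro x
    simp only [wext_cast, h, List.map_append]

theorem wext_length {k : ℕ} (w : ℕ → VWord k) (x : List (Fin k)) :
    (wext w x).length = ∑ i ∈ range x.length, (w i).length := by
  induction x generalizing w with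
  | nil => simp [wext]
  | cons b x ih =>
    simp only [wext, List.length_append, subst_length, ih, List.length_cons]
    rw [Finset.sum_range_succ', add_comm]

theorem IsEmb.length_eq {k : ℕ} {Φ : List (Fin k) → List (Fin k)} (h : IsEmb Φ)
    {x y : List (Fin k)} (hxy : x.length = y.length) : (Φ x).length = (Φ y).length := by
  obtain ⟨c, w, hw, h⟩ := h
  rw [h, h, List.length_append, List.length_append, wext_length, wext_length, hxy]

def HasTree {k : ℕ} (d : ℕ) (A : Set (List (Fin k))) : Prop :=
  ∃ Φ, IsEmb Φ ∧ ∀ x : List (Fin k), x.length < d → Φ x ∈ A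

noncomputable def ind {α : Type*} (A : Set α) : α → ℝ := A.indicator (fun _ => 1)

theorem ind_nonneg {α : Type*} (A : Set α) (x : α) : 0 ≤ ind A x :=
  Set.indicator_nonneg (fun _ _ => zero_le_one) _

theorem ind_le_one {α : Type*} (A : Set α) (x : α) : ind A x ≤ 1 :=
  Set.indicator_le_self' (fun _ _ => zero_le_one) x

theorem ind_of_mem {α : Type*} {A : Set α} {x : α} (h : x ∈ A) : ind A x = 1 :=
  Set.indicator_of_mem h _

theorem ind_of_notMem {α : Type*} {A : Set α} {x : α} (h : x ∉ A) : ind A x = 0 :=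
  Set.indicator_of_notMem h _

def AD (k d : ℕ) : Prop := ∀ δ : ℝ, 0 < δ → ∃ n : ℕ, 0 < n ∧
  ∀ A : Set (List (Fin k)), δ ≤ nu n (ind A) → HasTree d A

open Classical in
theorem tree_weight {k d m : ℕ} [NeZero d] (a : Fin k) (B : Set (List (Fin k)))
    (hB : ∀ b ∈ B, b.length < m) :
    ∃ u : List (Fin (k + 1)) → ℝ, (∀ l, 0 ≤ u l) ∧ (∀ l, u l ≤ 1) ∧
      (∀ (β : ℝ) (F : List (Fin (k + 1)) → ℝ),
        (∀ Ψ, IsEmb Ψ → nu d (fun x => F (Ψ x)) ≤ -β) →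
        nu m (fun l => F l * u l) ≤
          -(1 / ((m : ℝ) * ((k + 1 : ℕ) : ℝ) ^ m) * β) * (if HasTree d B then 1 else 0)) ∧
      (∀ (e : ℝ) (g : List (Fin (k + 1)) → ℝ), Ins a g →
        (∀ b ∈ B, e ≤ g (b.map Fin.castSucc)) → ∀ l, u l ≠ 0 → e ≤ g l) := by
  by_cases hT : HasTree d B
  swap
  · refine ⟨fun _ => 0, by simp, by simp, ?_, by simp⟩
    intro β F _
    simp [hT, nu]
  obtain ⟨Ψ, hΨ, hΨB⟩ := hT
  obtain ⟨Φ, hΦ, hΦΨ⟩ := hΨ.hat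
  have hcast : ∀ x : List (Fin (k+1)), x.length < d → ∃ b ∈ B, Φ (x.map (rr a)) = b.map Fin.castSucc := by
    intro x hx
    obtain ⟨y, hy⟩ := exists_map_rr a x
    have : y.length = x.length := by
      have := congrArg List.length hy; simpa using this.symm
    exact ⟨Ψ y, hΨB y (by omega), by rw [hy, hΦΨ]⟩
  have hlen : ∀ x : List (Fin (k+1)), x.length < d → (Φ x).length < m := by
    intro x hx
    obtain ⟨b, hb, h⟩ := hcast x hx
    have h2 := hΦ.length_eq (x := x) (y := x.map (rr a)) (by simp)
    rw [h2, h, List.length_map]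
    exact hB b hb
  have hmpos : 0 < m := by
    have := hlen [] (by simpa using NeZero.pos d); omega
  set κ : ℝ := 1 / ((m : ℝ) * ((k + 1 : ℕ) : ℝ) ^ m) with hκ
  have hκ0 : 0 < κ := by positivity
  set pt : List (Fin (k+1)) → ℝ := fun l => nu m (fun l' => if l' = l then (1 : ℝ) else 0) with hpt
  have hpt1 : ∀ l, l.length < m → κ ≤ pt l := by
    intro l hl
    have := le_nu_point (α := Fin (k+1)) l hl
    rw [Fintype.card_fin] at this
    exact this
  set u : List (Fin (k+1)) → ℝ := fun l => nu d (fun x => if Φ x = l then κ / pt l else 0) with hu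
  have hpt0 : ∀ l, 0 ≤ pt l := fun l => nu_nonneg fun l => by split_ifs <;> norm_num
  refine ⟨u, ?_, ?_, ?_, ?_⟩
  · intro l
    apply nu_nonneg; intro x
    split_ifs
    · exact div_nonneg hκ0.le (hpt0 _)
    · exact le_rfl
  · intro l
    rw [← nu_const (α := Fin (k+1)) (n := d) 1]
    apply nu_mono'
    intro x hx
    split_ifs with h
    · have := hpt1 l (h ▸ hlen x hx)
      rw [div_le_one (hκ0.trans_le this)]; exact this
    · norm_num
  · intro β F hF
    rw [if_pos ⟨Ψ, hΨ, hΨB⟩, mul_one]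
    have e1 : nu m (fun l => F l * u l) = nu d (fun x => κ * F (Φ x)) := by
      have : ∀ l, F l * u l = nu d (fun x => F l * (if Φ x = l then κ / pt l else 0)) := by
        intro l; rw [nu_mul]
      simp only [this]
      have sw : ∀ (G : List (Fin (k+1)) → List (Fin (k+1)) → ℝ),
          nu m (fun l => nu d (fun x => G l x)) = nu d (fun x => nu m (fun l => G l x)) := by
        intro G
        show nu m (fun l => 𝔼 t : Fin d, 𝔼 z : Fin d → Fin (k+1), G l (tr z t)) = _
        rw [nu_expect]
        show _ = 𝔼 t : Fin d, 𝔼 z : Fin d → Fin (k+1), _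
        refine Finset.expect_congr rfl fun t _ => ?_
        rw [nu_expect]
      rw [sw]
      apply nu_congr'
      intro x hx
      have h3 := hpt1 _ (hlen x hx)
      have : ∀ l, F l * (if Φ x = l then κ / pt l else 0) =
          (F (Φ x) * (κ / pt (Φ x))) * (if l = Φ x then 1 else 0) := by
        intro l
        by_cases h : l = Φ x
        · subst h; simp
        · simp [h, Ne.symm h]
      simp only [this]
      rw [nu_mul]
      show F (Φ x) * (κ / pt (Φ x)) * pt (Φ x) = _
      have : pt (Φ x) ≠ 0 := (hκ0.trans_le h3).ne'
      field_simp
    rw [e1, nu_mul]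
    have := hF Φ hΦ
    have := mul_le_mul_of_nonneg_left this hκ0.le
    linarith
  · intro e g hg hgB l hl
    have : ∃ x : List (Fin (k+1)), x.length < d ∧ Φ x = l := by
      by_contra hcon
      push Not at hcon
      apply hl
      have : u l = nu d (fun _ : List (Fin (k+1)) => (0:ℝ)) := by
        apply nu_congr'
        intro x hx
        rw [if_neg (hcon x hx)]
      rw [this, nu_const]
    obtain ⟨x, hx, rfl⟩ := this
    obtain ⟨b, hb, h⟩ := hcast x hx
    have h2 := hg.comp hΦ x
    simp only at h2
    rw [← h2, h]
    exact hgB b hb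

open Finset BigOperators
set_option linter.all false

def Bad {K : ℕ} (d : ℕ) (β : ℝ) (F : List (Fin K) → ℝ) : Prop :=
  (∀ l, F l ≤ 1) ∧ ∀ Φ, IsEmb Φ → nu d (fun x => F (Φ x)) ≤ -β

theorem Bad.comp {K d : ℕ} {β : ℝ} {F : List (Fin K) → ℝ} (h : Bad d β F)
    {Φ : List (Fin K) → List (Fin K)} (hΦ : IsEmb Φ) : Bad d β (fun x => F (Φ x)) :=
  ⟨fun l => h.1 _, fun Ψ hΨ => h.2 _ (hΦ.comp hΨ)⟩

def QQ {k : ℕ} (a : Fin k) (d : ℕ) (β : ℝ) (M : ℕ) (s : ℝ) : Prop :=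
  ∀ F : List (Fin (k + 1)) → ℝ, Bad d β F → ∀ g, Ins a g → (∀ l, 0 ≤ g l) → (∀ l, g l ≤ 1) →
    nu M (fun l => F l * g l) ≤ s

theorem QQ.mul {k : ℕ} {a : Fin k} {d : ℕ} {β : ℝ} {M : ℕ} {s : ℝ} (h : QQ a d β M s) (r : ℕ)
    [NeZero r] : QQ a d β (r * M) s := by
  intro F hF g hg h0 h1
  exact nu_mul_le (f := fun l => F l * g l) (fun Φ hΦ =>
    h (fun l => F (Φ l)) (hF.comp hΦ) (fun l => g (Φ l)) (hg.comp hΦ) (fun _ => h0 _) (fun _ => h1 _))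

theorem expect_eval {ι β : Type*} [Fintype ι] [Fintype β] [DecidableEq ι] [Nonempty β]
    (j : ι) (f : β → ℝ) : 𝔼 S : ι → β, f (S j) = 𝔼 q, f q := by
  rw [← expect_update j]; simp

def bj {m n : ℕ} (t : Fin (m * n)) : Fin m := (finProdFinEquiv.symm t).1
def bq {m n : ℕ} (t : Fin (m * n)) : Fin n := (finProdFinEquiv.symm t).2
theorem bj_pos {m n : ℕ} (b : Fin m) (q : Fin n) : bj (pos b q) = b := by simp [bj, pos, -finProdFinEquiv_symm_apply]
theorem bq_pos {m n : ℕ} (b : Fin m) (q : Fin n) : bq (pos b q) = q := by simp [bq, pos, -finProdFinEquiv_symm_apply]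
theorem pos_bj_bq {m n : ℕ} (t : Fin (m * n)) : pos (bj t) (bq t) = t := by
  simp [bq, bj, pos, -finProdFinEquiv_symm_apply]

def upos {m M p : ℕ} (U : Fin (m * M) → Fin p) (t : Fin (m * M)) : Fin (m * (M * p)) :=
  pos (bj t) (pos (bq t) (U t))

theorem upos_strictMono {m M p : ℕ} (U : Fin (m * M) → Fin p) : StrictMono (upos U) := by
  intro t t' h
  rw [← pos_bj_bq t, ← pos_bj_bq t', pos_lt_pos] at h
  unfold upos
  rw [pos_lt_pos, pos_lt_pos]
  tauto

open Classical in
theorem decouple {k d m M p : ℕ} [NeZero m] [NeZero M] [NeZero p] {a : Fin k} {β s : ℝ}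
    (hQ : QQ a d β M s) {F : List (Fin (k + 1)) → ℝ} (hF : Bad d β F)
    (G : (Fin m → Fin (M * p)) → (Fin (m * (M * p)) → Fin (k + 1)) → Fin m → ℝ)
    (hG0 : ∀ S z j, 0 ≤ G S z j) (hG1 : ∀ S z j, G S z j ≤ 1)
    (hG : ∀ S z z' j, (∀ i, rr a (z i) = rr a (z' i)) →
      (∀ i, z (pos i (S i)) = z' (pos i (S i))) → G S z j = G S z' j) :
    𝔼 S, 𝔼 j, 𝔼 z, F (tr z (pos j (S j))) * G S z j ≤ s + m / p := by
  let nc : (Fin (m * M) → Fin p) → (Fin m → Fin (M * p)) → Fin m → Prop := fun U S j =>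
    ∀ i, i ≠ j → ∀ r, S i ≠ pos r (U (pos i r))
  let Z : (Fin (m * M) → Fin p) → Fin (m * M) → (Fin (m * M) → Fin (k + 1)) →
    (Fin (m * (M * p)) → Fin (k + 1)) → (Fin (m * (M * p)) → Fin (k + 1)) :=
    fun U t x y => pl (upos U) (univ.filter (· < t)) x y
  let S' : (Fin (m * M) → Fin p) → Fin (m * M) → (Fin m → Fin (M * p)) → (Fin m → Fin (M * p)) :=
    fun U t S => Function.update S (bj t) (pos (bq t) (U t))
  let g' : (Fin (m * M) → Fin p) → (Fin (m * (M * p)) → Fin (k + 1)) → Fin (m * M) →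
    (Fin (m * M) → Fin (k + 1)) → ℝ := fun U y t x =>
    𝔼 S, (if nc U S (bj t) then 1 else 0) * G (S' U t S) (Z U t x y) (bj t)
  have hloc : ∀ U y t x x', (∀ b < t, x b = x' b) → g' U y t x = g' U y t x' := by
    intro U y t x x' h
    have : Z U t x y = Z U t x' y := by
      funext q
      by_cases hq : ∃ b ∈ univ.filter (· < t), upos U b = q
      · obtain ⟨b, hb, rfl⟩ := hq
        simp only [Z]
        rw [pl_mem (upos_strictMono U).injective _ _ hb, pl_mem (upos_strictMono U).injective _ _ hb]
        exact h b (by simpa using hb)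
      · push Not at hq
        simp only [Z]
        rw [pl_not _ _ hq, pl_not _ _ hq]
    simp only [g', this]
  have hins : ∀ U y t x, g' U y t (fun b => rr a (x b)) = g' U y t x := by
    intro U y t x
    refine Finset.expect_congr rfl fun S _ => ?_
    by_cases hnc : nc U S (bj t)
    swap
    · simp [hnc]
    congr 1
    apply hG
    · intro i
      simp only [Z]
      rw [pl_map (rr a), pl_map (rr a)]
      simp only [rr_rr]
    · have hnp : ∀ i, ∀ b ∈ univ.filter (· < t), upos U b ≠ pos i (S' U t S i) := by
        intro i b hb e
        by_cases hi : i = bj t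
        · subst hi
          simp only [S', Function.update_self] at e
          have : b = t := (upos_strictMono U).injective e
          subst this
          simp at hb
        · simp only [S', Function.update_of_ne hi] at e
          unfold upos at e
          rw [pos_inj] at e
          obtain ⟨e1, e2⟩ := e
          apply hnc i hi (bq b)
          rw [← e2, ← e1, pos_bj_bq]
      intro i
      simp only [Z]
      rw [pl_not _ _ (hnp i), pl_not _ _ (hnp i)]
  have h01 : ∀ S U t x y, 0 ≤ (if nc U S (bj t) then (1:ℝ) else 0) * G (S' U t S) (Z U t x y) (bj t) ∧
      (if nc U S (bj t) then (1:ℝ) else 0) * G (S' U t S) (Z U t x y) (bj t) ≤ 1 := by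
    intro S U t x y
    split_ifs
    · simp [hG0, hG1]
    · simp
  have hg0 : ∀ U y t x, 0 ≤ g' U y t x := fun U y t x =>
    Finset.expect_nonneg fun S _ => (h01 S U t x y).1
  have hg1 : ∀ U y t x, g' U y t x ≤ 1 := fun U y t x =>
    Finset.expect_le univ_nonempty fun S _ => (h01 S U t x y).2
  have hUy : ∀ U y, 𝔼 t, 𝔼 x, F (tr (Z U t x y) (upos U t)) * g' U y t x ≤ s := by
    intro U y
    obtain ⟨gL, hgL, hgL0⟩ := conv (g' U y) (hloc U y)
    have hcases : ∀ l : List (Fin (k+1)), (gL l = 0 ∧ m * M ≤ l.length) ∨ ∃ (t : Fin (m * M)) (x : Fin (m * M) → Fin (k+1)), l = tr x t := by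
      intro l
      by_cases hl : l.length < m * M
      · obtain ⟨x, hx⟩ := exists_tr_of_length l hl
        exact Or.inr ⟨_, _, hx.symm⟩
      · exact Or.inl ⟨hgL0 _ (not_lt.1 hl), not_lt.1 hl⟩
    have := hQ.mul m _ (hF.comp (isEmb_emb (upos U) y)) gL ?_ ?_ ?_
    · refine le_trans (le_of_eq ?_) this
      unfold nu
      refine Finset.expect_congr rfl fun t _ => ?_
      refine Finset.expect_congr rfl fun x _ => ?_
      beta_reduce
      rw [hgL, emb_tr (upos_strictMono U)]
      congr 2
      rw [tr_congr]
      intro q hq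
      by_cases hq' : ∃ b, upos U b = q
      · obtain ⟨b, rfl⟩ := hq'
        have hb : b < t := (upos_strictMono U).lt_iff_lt.1 hq
        simp only [Z]
        rw [pl_mem (upos_strictMono U).injective _ _ (by simpa using hb),
          pl_mem (upos_strictMono U).injective _ _ (by simp)]
      · push Not at hq'
        simp only [Z]
        rw [pl_not _ _ (fun b _ => hq' b), pl_not _ _ (fun b _ => hq' b)]
    · intro l
      rcases hcases l with ⟨h, h'⟩ | ⟨t, x, rfl⟩
      · rw [h, hgL0 _ (by simpa using h')]
      · rw [tr_map, hgL, hgL, hins]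
    · intro l
      rcases hcases l with ⟨h, h'⟩ | ⟨t, x, rfl⟩
      · rw [h]
      · rw [hgL]; exact hg0 _ _ _ _
    · intro l
      rcases hcases l with ⟨h, h'⟩ | ⟨t, x, rfl⟩
      · rw [h]; norm_num
      · rw [hgL]; exact hg1 _ _ _ _
  let H : (Fin m → Fin (M * p)) → Fin m → ℝ := fun S j => 𝔼 z, F (tr z (pos j (S j))) * G S z j
  have hH1 : ∀ S j, H S j ≤ 1 := by
    intro S j
    apply Finset.expect_le univ_nonempty
    intro z _
    have := mul_le_mul_of_nonneg_right (hF.1 (tr z (pos j (S j)))) (hG0 S z j)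
    linarith [hG1 S z j]
  have hU : ∀ U, 𝔼 t, 𝔼 S, (if nc U S (bj t) then 1 else 0) * H (S' U t S) (bj t) ≤ s := by
    intro U
    have h1 : 𝔼 y, 𝔼 t, 𝔼 x, F (tr (Z U t x y) (upos U t)) * g' U y t x ≤ s :=
      Finset.expect_le univ_nonempty fun y _ => hUy U y
    refine le_trans (le_of_eq ?_) h1
    conv_rhs => rw [Finset.expect_comm]
    refine Finset.expect_congr rfl fun t _ => ?_
    simp only [g', Finset.mul_expect]
    have : ∀ y : Fin (m * (M * p)) → Fin (k + 1), (𝔼 x, 𝔼 S, F (tr (Z U t x y) (upos U t)) * ((if nc U S (bj t) then 1 else 0) * G (S' U t S) (Z U t x y) (bj t))) = 𝔼 S, 𝔼 x, F (tr (Z U t x y) (upos U t)) * ((if nc U S (bj t) then 1 else 0) * G (S' U t S) (Z U t x y) (bj t)) := by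
      intro y; rw [Finset.expect_comm]
    simp only [this]
    conv_rhs => rw [Finset.expect_comm]
    refine Finset.expect_congr rfl fun S _ => ?_
    have := expect_pl (upos_strictMono U).injective (univ.filter (· < t))
      (fun z : Fin (m * (M * p)) → Fin (k + 1) => F (tr z (upos U t)) * ((if nc U S (bj t) then 1 else 0) * G (S' U t S) z (bj t)))
    simp only [Z]
    rw [this]
    simp only [H, Finset.mul_expect]
    refine Finset.expect_congr rfl fun z _ => ?_
    have : pos (bj t) (S' U t S (bj t)) = upos U t := by
      simp [S', upos]
    rw [this]
    ring
  have hlow : ∀ U t S, H (S' U t S) (bj t) - ∑ i, (if ∃ r, S i = pos r (U (pos i r)) then 1 else 0)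
      ≤ (if nc U S (bj t) then 1 else 0) * H (S' U t S) (bj t) := by
    intro U t S
    by_cases hnc : nc U S (bj t)
    · rw [if_pos hnc, one_mul, sub_le_self_iff]
      exact Finset.sum_nonneg fun i _ => by split_ifs <;> norm_num
    · rw [if_neg hnc, zero_mul]
      simp only [nc] at hnc
      push Not at hnc
      obtain ⟨i, _, r, hr⟩ := hnc
      have := Finset.single_le_sum (f := fun i => if ∃ r, S i = pos r (U (pos i r)) then (1:ℝ) else 0)
        (s := univ) (fun i _ => by split_ifs <;> norm_num) (Finset.mem_univ i)
      rw [if_pos ⟨r, hr⟩] at this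
      linarith [hH1 (S' U t S) (bj t)]
  have hsum : ∀ U : Fin (m * M) → Fin p, 𝔼 S : Fin m → Fin (M * p),
      ∑ i, (if ∃ r, S i = pos r (U (pos i r)) then (1 : ℝ) else 0) = m / p := by
    intro U
    rw [Finset.expect_sum_comm]
    have : ∀ i : Fin m, 𝔼 S : Fin m → Fin (M * p), (if ∃ r, S i = pos r (U (pos i r)) then (1 : ℝ) else 0) = 1 / p := by
      intro i
      rw [expect_eval i (fun q => if ∃ r, q = pos r (U (pos i r)) then (1 : ℝ) else 0), expect_blk]
      have : ∀ (b : Fin M) (q : Fin p), (∃ r, pos b q = pos r (U (pos i r))) ↔ q = U (pos i b) := by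
        intro b q
        constructor
        · rintro ⟨r, hr⟩
          rw [pos_inj] at hr
          obtain ⟨rfl, h⟩ := hr
          exact h
        · rintro rfl; exact ⟨b, rfl⟩
      simp only [this]
      have : ∀ b : Fin M, 𝔼 q : Fin p, (if q = U (pos i b) then (1:ℝ) else 0) = 1 / p := by
        intro b
        rw [Fintype.expect_eq_sum_div_card]; simp
      simp only [this, Fintype.expect_const]
    simp only [this]
    simp; field_simp
  have hfin : 𝔼 U : Fin (m * M) → Fin p, 𝔼 t, 𝔼 S, H (S' U t S) (bj t) = 𝔼 S, 𝔼 j, H S j := by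
    rw [Finset.expect_comm, expect_blk]
    conv_rhs => rw [Finset.expect_comm]
    refine Finset.expect_congr rfl fun j _ => ?_
    rw [← expect_update j (fun S => H S j)]
    simp only [expect_blk, S', bj_pos, bq_pos]
    conv_rhs => rw [Finset.expect_comm]
    refine Finset.expect_congr rfl fun r _ => ?_
    conv_rhs => rw [Finset.expect_comm]
    exact expect_eval (pos j r) (fun q => 𝔼 S, H (Function.update S j (pos r q)) j)
  have hA := Finset.expect_le univ_nonempty (fun U (_ : U ∈ univ) => hU U)
  have hB : 𝔼 U : Fin (m * M) → Fin p, 𝔼 t, 𝔼 S, (H (S' U t S) (bj t) -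
      ∑ i, (if ∃ r, S i = pos r (U (pos i r)) then (1:ℝ) else 0)) ≤ s := by
    refine le_trans ?_ hA
    exact Finset.expect_le_expect fun U _ => Finset.expect_le_expect fun t _ =>
      Finset.expect_le_expect fun S _ => hlow U t S
  simp only [Finset.expect_sub_distrib, hsum, Fintype.expect_const] at hB
  rw [hfin] at hB
  linarith

open Finset BigOperators
set_option linter.all false

theorem pl_pl_univ {B P α : Type*} [Fintype B] {σ : B → P} (hσ : Function.Injective σ)
    (x x' : B → α) (y : P → α) : pl σ univ x' (pl σ univ x y) = pl σ univ x' y := by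
  funext q
  by_cases hq : ∃ b, σ b = q
  · obtain ⟨b, rfl⟩ := hq
    rw [pl_mem hσ _ _ (by simp), pl_mem hσ _ _ (by simp)]
  · push Not at hq
    rw [pl_not _ _ (fun b _ => hq b), pl_not _ _ (fun b _ => hq b), pl_not _ _ (fun b _ => hq b)]

theorem pl_self {B P α : Type*} [Fintype B] {σ : B → P} (hσ : Function.Injective σ)
    (z : P → α) : pl σ univ (fun b => z (σ b)) z = z := by
  funext q
  by_cases hq : ∃ b, σ b = q
  · obtain ⟨b, rfl⟩ := hq
    rw [pl_mem hσ _ _ (by simp)]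
  · push Not at hq
    rw [pl_not _ _ (fun b _ => hq b)]

open Classical in
theorem step1 {k d m M : ℕ} [NeZero d] [NeZero m] [NeZero M] {a : Fin k} {β s ε : ℝ} (hβ : 0 < β)
    (hε : 0 < ε)
    (hm : ∀ A : Set (List (Fin k)), ε / 8 ≤ nu m (ind A) → HasTree d A)
    (hQ : QQ a d β M s) :
    ∃ M2 : ℕ, 0 < M2 ∧ QQ a d β M2
      (max ε (s - 1 / ((m : ℝ) * ((k + 1 : ℕ) : ℝ) ^ m) * β * ε ^ 2 / 64)) := by
  haveI : NeZero k := ⟨by have := a.2; omega⟩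
  have hm0 : (0 : ℝ) < m := by exact_mod_cast NeZero.pos m
  have hM0 : (1 : ℝ) ≤ M := by exact_mod_cast NeZero.one_le
  set κ : ℝ := 1 / ((m : ℝ) * ((k + 1 : ℕ) : ℝ) ^ m) with hκ
  have hκ0 : 0 < κ := by positivity
  set η' : ℝ := ε / (2 * m) with hη'
  have hη0 : 0 < η' := by positivity
  set η : ℝ := κ * β * ε ^ 2 / 64 with hη
  have hηpos : 0 < η := by positivity
  obtain ⟨p, hp⟩ := exists_nat_gt (max (m / η) (((k + 1 : ℕ) : ℝ) / η' ^ 2))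
  have hp1 : m / η < p := (le_max_left _ _).trans_lt hp
  have hp2 : ((k + 1 : ℕ) : ℝ) / η' ^ 2 < p := (le_max_right _ _).trans_lt hp
  have hp0 : (0 : ℝ) < p := lt_trans (by positivity) hp1
  haveI : NeZero p := ⟨by rintro rfl; simp at hp0⟩
  have hmp : m / p ≤ η := by
    rw [div_lt_iff₀ hηpos] at hp1
    rw [div_le_iff₀ hp0]; linarith
  have hKp : ((k + 1 : ℕ) : ℝ) ≤ η' ^ 2 * ((M * p : ℕ) : ℝ) := by
    rw [div_lt_iff₀ (by positivity)] at hp2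
    push_cast at hp2 ⊢
    have : (p : ℝ) ≤ M * p := by nlinarith
    nlinarith [pow_pos hη0 2]
  refine ⟨m * (M * p), Nat.pos_of_ne_zero (NeZero.ne _), ?_⟩
  intro F hF g hg hg0 hg1
  have hFg : ∀ l, F l * g l ≤ g l := fun l => by
    have := mul_le_mul_of_nonneg_right (hF.1 l) (hg0 l); linarith
  by_cases hsmall : nu (m * (M * p)) g < ε
  · exact le_max_of_le_left ((nu_mono hFg).trans hsmall.le)
  push Not at hsmall
  apply le_max_of_le_right
  let σ : (Fin m → Fin (M * p)) → Fin m → Fin (m * (M * p)) := fun S b => pos b (S b)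
  have hσ : ∀ S, StrictMono (σ S) := fun S => pos_sel_strictMono S
  let B : (Fin m → Fin (M * p)) → (Fin (m * (M * p)) → Fin (k + 1)) → Set (List (Fin k)) :=
    fun S y => {l | l.length < m ∧ ε / 8 ≤ g (emb (σ S) y (l.map Fin.castSucc))}
  have hBlen : ∀ S y, ∀ b ∈ B S y, b.length < m := fun S y b hb => hb.1
  have tw := fun B hB => tree_weight (d := d) (m := m) a B hB
  choose! u hu0 hu1 hu2 hu3 using tw
  have gemb : ∀ S y (x : Fin m → Fin k) t, g (emb (σ S) y ((tr x t).map Fin.castSucc)) =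
      g (tr (pl (σ S) univ (fun b => (x b).castSucc) y) (pos t (S t))) := by
    intro S y x t
    rw [tr_map, emb_tr (hσ S)]
  have hB1 : ∀ S z z', (∀ i, rr a (z i) = rr a (z' i)) → B S z = B S z' := by
    intro S z z' h
    apply Set.ext
    intro l
    simp only [B, Set.mem_setOf_eq]
    apply and_congr_right
    intro hl
    obtain ⟨x, hx⟩ := exists_tr_of_length l hl
    rw [← hx, gemb, gemb, ← hg, ← hg (tr (pl (σ S) univ (fun b => (x b).castSucc) z') _), tr_map,
      tr_map]
    simp only [pl_map (rr a), h]
  have hB2 : ∀ S x y, B S (pl (σ S) univ x y) = B S y := by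
    intro S x y
    apply Set.ext
    intro l
    simp only [B, Set.mem_setOf_eq]
    apply and_congr_right
    intro hl
    obtain ⟨x, hx⟩ := exists_tr_of_length l hl
    rw [← hx, gemb, gemb, pl_pl_univ (hσ S).injective]
  let G : (Fin m → Fin (M * p)) → (Fin (m * (M * p)) → Fin (k + 1)) → Fin m → ℝ := fun S z j =>
    g (tr z (pos j (S j))) - ε / 8 * u (B S z) (tr (fun i => z (σ S i)) j)
  have hG0 : ∀ S z j, 0 ≤ G S z j := by
    intro S z j
    simp only [G]
    by_cases h : u (B S z) (tr (fun i => z (σ S i)) j) = 0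
    · rw [h]; simp [hg0]
    · have h1 := hu3 (B S z) (hBlen S z) (ε / 8) (fun l => g (emb (σ S) z l))
        (hg.comp (isEmb_emb _ _)) (fun b hb => hb.2) _ h
      simp only [emb_tr (hσ S), pl_self (hσ S).injective] at h1
      have h2 := hu1 (B S z) (hBlen S z) (tr (fun i => z (σ S i)) j)
      have h3 : ε / 8 ≤ g (tr z (pos j (S j))) := h1
      nlinarith
  have hG1 : ∀ S z j, G S z j ≤ 1 := by
    intro S z j
    simp only [G]
    have := hu0 (B S z) (hBlen S z) (tr (fun i => z (σ S i)) j)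
    have h2 := hg1 (tr z (pos j (S j)))
    have : 0 ≤ ε / 8 * u (B S z) (tr (fun i => z (σ S i)) j) := by positivity
    linarith
  have hGI : ∀ S z z' j, (∀ i, rr a (z i) = rr a (z' i)) →
      (∀ i, z (pos i (S i)) = z' (pos i (S i))) → G S z j = G S z' j := by
    intro S z z' j h1 h2
    simp only [G, σ, h2, hB1 S z z' h1]
    congr 1
    rw [← hg, ← hg (tr z' _), tr_map, tr_map]
    simp only [h1]
  have hdec := decouple (p := p) hQ hF G hG0 hG1 hGI
  -- the probability of a good pair
  have hgood : ε / 4 ≤ 𝔼 S, 𝔼 y, (if HasTree d (B S y) then (1 : ℝ) else 0) := by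
    have hpt : ∀ S y, nu m (fun l : List (Fin k) => g (emb (σ S) y (l.map Fin.castSucc))) ≤
        ε / 4 + (if HasTree d (B S y) then (1 : ℝ) else 0) := by
      intro S y
      split_ifs with h
      · have := nu_le_one (n := m) (f := fun l : List (Fin k) => g (emb (σ S) y (l.map Fin.castSucc)))
          (fun l => hg1 _)
        linarith
      · have h1 : nu m (ind (B S y)) < ε / 8 := by
          by_contra hc; exact h (hm _ (not_lt.1 hc))
        have h2 : nu m (fun l : List (Fin k) => g (emb (σ S) y (l.map Fin.castSucc))) ≤
            nu m (fun l => ε / 8 + ind (B S y) l) := by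
          apply nu_mono'
          intro l hl
          by_cases hlB : l ∈ B S y
          · rw [ind_of_mem hlB]; linarith [hg1 (emb (σ S) y (l.map Fin.castSucc))]
          · rw [ind_of_notMem hlB]
            by_contra hc
            apply hlB
            exact ⟨hl, by linarith [not_le.1 hc]⟩
        rw [nu_add, nu_const] at h2
        linarith
    have h1 := Finset.expect_le_expect (s := univ) (fun S _ => Finset.expect_le_expect (s := univ)
      (fun y _ => hpt S y))
    simp only [Finset.expect_add_distrib, Fintype.expect_const] at h1
    have h2 : nu (m * (M * p)) g - m * η' ≤
        𝔼 S, 𝔼 y, nu m (fun l : List (Fin k) => g (emb (σ S) y (l.map Fin.castSucc))) := by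
      have e1 : 𝔼 S, 𝔼 y, nu m (fun l : List (Fin k) => g (emb (σ S) y (l.map Fin.castSucc))) =
          𝔼 j : Fin m, 𝔼 x : Fin m → Fin k, 𝔼 S, 𝔼 y, g (emb (σ S) y ((tr x j).map Fin.castSucc)) := by
        show _ = nu m (fun l : List (Fin k) => 𝔼 S, 𝔼 y, g (emb (σ S) y (l.map Fin.castSucc)))
        rw [nu_expect]
        refine Finset.expect_congr rfl fun S _ => ?_
        rw [nu_expect]
      have e2 : nu (m * (M * p)) g - m * η' = 𝔼 j : Fin m, 𝔼 x : Fin m → Fin k,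
          (𝔼 q : Fin (M * p), 𝔼 y : Fin (m * (M * p)) → Fin (k + 1), g (tr y (pos j q)) - m * η') := by
        simp only [Finset.expect_sub_distrib, Fintype.expect_const]
        unfold nu
        rw [expect_blk]
      rw [e1, e2]
      refine Finset.expect_le_expect fun j _ => Finset.expect_le_expect fun x _ => ?_
      simp only [tr_map]
      exact plant hη0 hKp hg0 hg1 (fun b => (x b).castSucc) j
    have h3 : m * η' = ε / 2 := by
      rw [hη']; field_simp
    linarith
  have e1 : 𝔼 S, 𝔼 j, 𝔼 z, F (tr z (pos j (S j))) * G S z j = nu (m * (M * p)) (fun l => F l * g l)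
      - ε / 8 * 𝔼 S, 𝔼 j, 𝔼 z, F (tr z (pos j (S j))) * u (B S z) (tr (fun i => z (σ S i)) j) := by
    have e2 : nu (m * (M * p)) (fun l => F l * g l) =
        𝔼 S : Fin m → Fin (M * p), 𝔼 j, 𝔼 z, F (tr z (pos j (S j))) * g (tr z (pos j (S j))) := by
      rw [Finset.expect_comm]
      unfold nu
      rw [expect_blk]
      refine Finset.expect_congr rfl fun j _ => ?_
      exact (expect_eval j (fun q => 𝔼 z, F (tr z (pos j q)) * g (tr z (pos j q)))).symm
    rw [e2]
    simp only [Finset.mul_expect, ← Finset.expect_sub_distrib]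
    refine Finset.expect_congr rfl fun S _ => Finset.expect_congr rfl fun j _ =>
      Finset.expect_congr rfl fun z _ => ?_
    simp only [G]; ring
  have e3 : 𝔼 S, 𝔼 j, 𝔼 z, F (tr z (pos j (S j))) * u (B S z) (tr (fun i => z (σ S i)) j) ≤
      𝔼 S, 𝔼 y, -(κ * β) * (if HasTree d (B S y) then (1 : ℝ) else 0) := by
    refine Finset.expect_le_expect fun S _ => ?_
    have e4 : 𝔼 j, 𝔼 z, F (tr z (pos j (S j))) * u (B S z) (tr (fun i => z (σ S i)) j) =
        𝔼 y, nu m (fun l => F (emb (σ S) y l) * u (B S y) l) := by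
      unfold nu
      conv_rhs => rw [Finset.expect_comm]
      refine Finset.expect_congr rfl fun j _ => ?_
      rw [← expect_pl (hσ S).injective univ]
      refine Finset.expect_congr rfl fun y _ => Finset.expect_congr rfl fun x _ => ?_
      have : (fun i => pl (σ S) univ x y (σ S i)) = x := by
        funext i; exact pl_mem (hσ S).injective _ _ (by simp)
      beta_reduce
      rw [this, hB2, emb_tr (hσ S)]
    rw [e4]
    refine Finset.expect_le_expect fun y _ => ?_
    exact hu2 (B S y) (hBlen S y) β _ (hF.comp (isEmb_emb _ _)).2
  simp only [← Finset.mul_expect] at e3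
  have e5 : κ * β * (ε / 4) ≤ κ * β * 𝔼 S, 𝔼 y, (if HasTree d (B S y) then (1 : ℝ) else 0) := by
    gcongr
  rw [e1] at hdec
  have e6 : ε / 8 * 𝔼 S, 𝔼 j, 𝔼 z, F (tr z (pos j (S j))) * u (B S z) (tr (fun i => z (σ S i)) j) ≤
      ε / 8 * (-(κ * β) * (ε / 4)) := by
    gcongr
    linarith
  have e7 : ε / 8 * (-(κ * β) * (ε / 4)) = - (2 * η) := by rw [hη]; ring
  linarith

theorem lemma1 {k d : ℕ} [NeZero d] (had : AD k d) (a : Fin k) {β ε : ℝ} (hβ : 0 < β)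
    (hε : 0 < ε) : ∃ M : ℕ, 0 < M ∧ QQ a d β M ε := by
  obtain ⟨m, hm0, hm⟩ := had (ε / 8) (by positivity)
  haveI : NeZero m := ⟨hm0.ne'⟩
  set η : ℝ := 1 / ((m : ℝ) * ((k + 1 : ℕ) : ℝ) ^ m) * β * ε ^ 2 / 64 with hη
  have hηpos : 0 < η := by
    have : (0 : ℝ) < m := by exact_mod_cast hm0
    positivity
  have main : ∀ i : ℕ, ∃ M : ℕ, 0 < M ∧ QQ a d β M (max ε (1 - i * η)) := by
    intro i
    induction i with
    | zero =>
      refine ⟨1, one_pos, ?_⟩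
      intro F hF g hg h0 h1
      simp only [Nat.cast_zero, zero_mul, sub_zero]
      apply le_max_of_le_right
      apply nu_le_one
      intro l
      have := mul_le_mul_of_nonneg_right (hF.1 l) (h0 l)
      linarith [h1 l]
    | succ i ih =>
      obtain ⟨M, hM, hQ⟩ := ih
      haveI : NeZero M := ⟨hM.ne'⟩
      obtain ⟨M2, hM2, hQ2⟩ := step1 hβ hε hm hQ
      refine ⟨M2, hM2, fun F hF g hg h0 h1 => (hQ2 F hF g hg h0 h1).trans ?_⟩
      rw [← hη]
      apply max_le (le_max_left _ _)
      rcases le_total ε (1 - i * η) with h | h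
      · rw [max_eq_right h]
        apply le_max_of_le_right
        push_cast; linarith
      · rw [max_eq_left h]
        apply le_max_of_le_left; linarith
  obtain ⟨i, hi⟩ := exists_nat_gt (1 / η)
  obtain ⟨M, hM, hQ⟩ := main i
  rw [div_lt_iff₀ hηpos] at hi
  rw [max_eq_left (by linarith)] at hQ
  exact ⟨M, hM, hQ⟩

theorem lemma2 {k : ℕ} (had : ∀ d, AD k d) (s : Finset (Fin k)) : ∀ (d : ℕ), 0 < d → ∀ (β ε : ℝ), 0 < β → 
    0 < ε → ∃ M : ℕ, 0 < M ∧ ∀ F : List (Fin (k + 1)) → ℝ, Bad d β F →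
      ∀ g : Fin k → List (Fin (k + 1)) → ℝ, (∀ a, Ins a (g a)) → (∀ a l, 0 ≤ g a l) →
        (∀ a l, g a l ≤ 1) → nu M (fun l => F l * ∏ a ∈ s, g a l) ≤ ε := by
  induction s using Finset.induction_on with
  | empty =>
    intro d hd β ε hβ hε
    refine ⟨d, hd, fun F hF g hg h0 h1 => ?_⟩
    have := hF.2 _ isEmb_id
    simp only [Finset.prod_empty, mul_one]
    linarith
  | insert b s hb ih =>
    intro d hd β ε hβ hε
    obtain ⟨M1, hM1, h1⟩ := ih d hd β (ε / 3) hβ (by positivity)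
    haveI : NeZero M1 := ⟨hM1.ne'⟩
    obtain ⟨M, hM, hQ⟩ := lemma1 (had M1) b (β := ε / 3) (ε := ε / 3) (by positivity) (by positivity)
    haveI : NeZero M := ⟨hM.ne'⟩
    refine ⟨M, hM, fun F hF g hg hg0 hg1 => ?_⟩
    have hp0 : ∀ l, 0 ≤ ∏ a ∈ s, g a l := fun l => Finset.prod_nonneg fun a _ => hg0 a l
    have hp1 : ∀ l, ∏ a ∈ s, g a l ≤ 1 := fun l => Finset.prod_le_one (fun a _ => hg0 a l) (fun a _ => hg1 a l)
    have := hQ (fun l => F l * (∏ a ∈ s, g a l) - 2 * ε / 3) ?_ (g b) (hg b) (hg0 b) (hg1 b)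
    · have e : nu M (fun l => F l * ∏ a ∈ insert b s, g a l) ≤
          nu M (fun l => (F l * (∏ a ∈ s, g a l) - 2 * ε / 3) * g b l + 2 * ε / 3) := by
        apply nu_mono
        intro l
        rw [Finset.prod_insert hb]
        have : 2 * ε / 3 * g b l ≤ 2 * ε / 3 * 1 := by gcongr; exact hg1 b l
        nlinarith
      rw [nu_add, nu_const] at e
      linarith
    · refine ⟨?_, ?_⟩
      · intro l
        have := mul_le_mul_of_nonneg_right (hF.1 l) (hp0 l)
        linarith [hp1 l]
      · intro Φ hΦ
        have := h1 _ (hF.comp hΦ) (fun a l => g a (Φ l)) (fun a => (hg a).comp hΦ)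
          (fun a l => hg0 a _) (fun a l => hg1 a _)
        rw [nu_sub, nu_const]
        linarith

open Finset BigOperators
set_option linter.all false

theorem hasTree_two {K : ℕ} {A : Set (List (Fin K))} {x : List (Fin K)} {v : VWord K}
    (hv : IsLeftVar v) (hx : x ∈ A) (h : ∀ a, x ++ subst v a ∈ A) : HasTree 2 A := by
  refine ⟨fun l => x ++ wext (fun _ => v) l, ⟨x, fun _ => v, fun _ => hv, fun _ => rfl⟩, ?_⟩
  intro l hl
  match l, hl with
  | [], _ => simpa [wext] using hx
  | [a], _ => simpa [wext] using h a

theorem HasTree.line {K : ℕ} {A : Set (List (Fin K))} (h : HasTree 2 A) :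
    ∃ (x : List (Fin K)) (v : VWord K), x ∈ A ∧ ∀ a, x ++ subst (none :: v) a ∈ A := by
  obtain ⟨Φ, ⟨c, w, hw, hΦ⟩, h⟩ := h
  have h0 := hw 0
  unfold IsLeftVar at h0
  cases hw0 : w 0 with
  | nil => rw [hw0] at h0; simp at h0
  | cons o v =>
    rw [hw0] at h0
    simp only [List.head?_cons, Option.some.injEq] at h0
    subst h0
    refine ⟨c, v, ?_, fun a => ?_⟩
    · simpa [hΦ, wext] using h [] (by simp)
    · simpa [hΦ, wext, hw0] using h [a] (by simp)

theorem HasTree.comp {K d : ℕ} {A : Set (List (Fin K))} {Φ : List (Fin K) → List (Fin K)}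
    (hΦ : IsEmb Φ) (h : HasTree d {x | Φ x ∈ A}) : HasTree d A := by
  obtain ⟨Ψ, hΨ, h⟩ := h
  exact ⟨_, hΦ.comp hΨ, h⟩

def DD {k : ℕ} (A : Set (List (Fin (k + 1)))) (x : List (Fin (k + 1))) :
    Set (List (Fin (k + 1))) := {z | ∀ a : Fin k, x ++ a.castSucc :: z.map (rr a) ∈ A}

def PP (K : ℕ) (δ : ℝ) : Prop :=
  ∃ n : ℕ, 0 < n ∧ ∀ A : Set (List (Fin K)), δ ≤ nu n (ind A) → HasTree 2 A

def hatV {k : ℕ} (u : List (Fin (k + 1))) : VWord (k + 1) :=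
  u.map (fun c => if c = Fin.last k then none else some c)

theorem subst_hatV {k : ℕ} (u : List (Fin (k + 1))) (a : Fin k) :
    subst (hatV u) a.castSucc = u.map (rr a) := by
  simp only [subst, hatV, List.map_map]
  apply List.map_congr_left
  intro c _
  by_cases h : c = Fin.last k <;> simp [h, rr]

theorem subst_hatV_last {k : ℕ} (u : List (Fin (k + 1))) :
    subst (hatV u) (Fin.last k) = u := by
  simp only [subst, hatV, List.map_map]
  conv_rhs => rw [← List.map_id u]
  apply List.map_congr_left
  intro c _
  by_cases h : c = Fin.last k <;> simp [h]

theorem subst_cons_none {K : ℕ} (v : VWord K) (a : Fin K) :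
    subst (none :: v) a = a :: subst v a := by simp [subst]

open Classical in
theorem local_step {k : ℕ} (had : ∀ d, AD k d) {δ : ℝ} (hδ : 0 < δ)
    (hP : ∀ γ > 0, PP (k + 1) (δ + γ)) {ξ : ℝ} (hξ : 0 < ξ) (b : ℕ) :
    ∃ M : ℕ, 0 < M ∧ b ≤ M ∧ ∀ A : Set (List (Fin (k + 1))), ¬ HasTree 2 A → ∀ x,
      nu (2 * M) (fun z => ind A (x ++ Fin.last k :: z)) +
        δ * (ind A x * nu (2 * M) (ind (DD A x))) ≤ δ + ξ := by
  obtain ⟨d, hd, hd2⟩ := hP (ξ / 4) (by positivity)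
  have hk1 : (0 : ℝ) < 2 * (k + 1) := by positivity
  obtain ⟨M, hM, h⟩ := lemma2 had univ d hd (ξ / 4) (ξ / (2 * (k + 1))) (by positivity)
    (by positivity)
  haveI : NeZero d := ⟨hd.ne'⟩
  refine ⟨(b + 1) * M, by positivity, by nlinarith, ?_⟩
  intro A hA x
  haveI : NeZero M := ⟨hM.ne'⟩
  haveI : NeZero (2 * ((b + 1) * M)) := ⟨by positivity⟩
  -- lemma 2 passes to multiples
  have h' : ∀ F : List (Fin (k + 1)) → ℝ, Bad d (ξ / 4) F →
      ∀ g : Fin k → List (Fin (k + 1)) → ℝ, (∀ a, Ins a (g a)) → (∀ a l, 0 ≤ g a l) →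
        (∀ a l, g a l ≤ 1) → nu (2 * ((b + 1) * M)) (fun l => F l * ∏ a, g a l) ≤
          ξ / (2 * (k + 1)) := by
    intro F hF g hg h0 h1
    rw [← mul_assoc]
    exact nu_mul_le (f := fun l => F l * ∏ a, g a l) (fun Φ hΦ =>
      h (fun l => F (Φ l)) (hF.comp hΦ) (fun a l => g a (Φ l)) (fun a => (hg a).comp hΦ)
        (fun _ _ => h0 _ _) (fun _ _ => h1 _ _))
  generalize 2 * ((b + 1) * M) = R at *
  have hΘ : IsEmb (fun z => x ++ Fin.last k :: z) := by
    have := isEmb_pre_append (x ++ [Fin.last k])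
    simpa using this
  set F : List (Fin (k + 1)) → ℝ := fun z => ind A (x ++ Fin.last k :: z) - (δ + ξ / 2) with hFdef
  have hF : Bad d (ξ / 4) F := by
    constructor
    · intro l
      have := ind_le_one A (x ++ Fin.last k :: l)
      simp only [F]; linarith
    · intro Φ hΦ
      simp only [F]
      rw [nu_sub, nu_const]
      have : nu d (fun l => ind A (x ++ Fin.last k :: Φ l)) < δ + ξ / 4 := by
        by_contra hc
        exact hA ((hd2 {l | x ++ Fin.last k :: Φ l ∈ A} (not_lt.1 hc)).comp (hΘ.comp hΦ))
      linarith
  let hh : Fin k → List (Fin (k + 1)) → ℝ := fun a z =>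
    ind A (x ++ a.castSucc :: z.map (rr a))
  have hh0 : ∀ a l, 0 ≤ hh a l := fun a l => ind_nonneg _ _
  have hh1 : ∀ a l, hh a l ≤ 1 := fun a l => ind_le_one _ _
  have hhI : ∀ a, Ins a (hh a) := by
    intro a l
    simp only [hh, List.map_map]
    congr 4
    funext c; exact rr_rr a c
  have hprod : ∀ l, ∏ a, hh a l = ind (DD A x) l := by
    intro l
    by_cases hl : l ∈ DD A x
    · rw [ind_of_mem hl]
      exact Finset.prod_eq_one fun a _ => ind_of_mem (hl a)
    · rw [ind_of_notMem hl]
      simp only [DD, Set.mem_setOf_eq, not_forall] at hl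
      obtain ⟨a, ha⟩ := hl
      exact Finset.prod_eq_zero (Finset.mem_univ a) (ind_of_notMem ha)
  -- decomposition
  have hdec : ∀ l, F l = F l * ind (DD A x) l +
      ∑ i, F l * ∏ a, (if a = i then 1 - hh a l else if a < i then hh a l else 1) := by
    intro l
    have h1 := Finset.prod_one_sub_ordered univ (fun a => 1 - hh a l)
    simp only [sub_sub_cancel, hprod] at h1
    have h2 : ∀ i, ∏ a, (if a = i then 1 - hh a l else if a < i then hh a l else 1) =
        (1 - hh i l) * ∏ a ∈ univ.filter (· < i), hh a l := by
      intro i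
      rw [← Finset.mul_prod_erase univ _ (Finset.mem_univ i), if_pos rfl, Finset.prod_filter]
      congr 1
      rw [← Finset.mul_prod_erase univ (fun a => if a < i then hh a l else 1) (Finset.mem_univ i),
        if_neg (lt_irrefl i), one_mul]
      refine Finset.prod_congr rfl fun a ha => ?_
      rw [if_neg (Finset.ne_of_mem_erase ha)]
    simp only [h2]
    rw [← Finset.mul_sum, h1]
    ring
  have hsum : nu R F ≤ nu R (fun l => F l * ind (DD A x) l) + k * (ξ / (2 * (k + 1))) := by
    have e : nu R F = nu R (fun l => F l * ind (DD A x) l) + ∑ i, nu R (fun l => F l *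
        ∏ a, (if a = i then 1 - hh a l else if a < i then hh a l else 1)) := by
      rw [← nu_sum, ← nu_add]
      exact nu_congr' fun l _ => hdec l
    rw [e]
    gcongr
    calc _ ≤ ∑ i : Fin k, ξ / (2 * (k + 1)) := by
          refine Finset.sum_le_sum fun i _ => ?_
          refine h' F hF (fun a l => if a = i then 1 - hh a l else if a < i then hh a l else 1) ?_ ?_ ?_
          · intro a l
            simp only [hhI a l]
          · intro a l
            split_ifs
            · linarith [hh1 a l]
            · exact hh0 a l
            · norm_num
          · intro a l
            split_ifs
            · linarith [hh0 a l]
            · exact hh1 a l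
            · norm_num
      _ = _ := by simp
  have hk2 : k * (ξ / (2 * (k + 1))) ≤ ξ / 2 := by
    rw [mul_div_assoc', div_le_iff₀ hk1]
    nlinarith
  have hk3 : ξ / (2 * (k + 1)) ≤ ξ / 2 := by
    have : (0:ℝ) ≤ k := by positivity
    apply div_le_div_of_nonneg_left hξ.le <;> linarith
  have hFnu : nu R F = nu R (fun z => ind A (x ++ Fin.last k :: z)) - (δ + ξ / 2) := by
    simp only [F]
    rw [nu_sub, nu_const]
  by_cases hx : x ∈ A
  · rw [ind_of_mem hx, one_mul]
    have : nu R (fun l => F l * ind (DD A x) l) = -(δ + ξ / 2) * nu R (ind (DD A x)) := by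
      rw [← nu_mul]
      refine nu_congr' fun l _ => ?_
      by_cases hl : l ∈ DD A x
      · have : x ++ Fin.last k :: l ∉ A := by
          intro hc
          apply hA
          refine hasTree_two (v := none :: hatV l) rfl hx ?_
          intro a
          rw [subst_cons_none]
          induction a using Fin.lastCases with
          | last => rw [subst_hatV_last]; exact hc
          | cast a => rw [subst_hatV]; exact hl a
        simp only [F]
        rw [ind_of_mem hl, ind_of_notMem this]; ring
      · rw [ind_of_notMem hl]; ring
    have h0 : 0 ≤ nu R (ind (DD A x)) := nu_nonneg fun l => ind_nonneg _ _
    nlinarith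
  · rw [ind_of_notMem hx]
    have := h' F hF (fun _ _ => 1) (fun _ _ => rfl) (by simp) (by simp)
    simp only [Finset.prod_const_one, mul_one] at this
    have : nu R F ≤ ξ / (2 * (k + 1)) := this
    simp only [zero_mul, mul_zero]
    linarith

open Finset BigOperators
set_option linter.all false

theorem expect_tr_ofFn {α : Type*} [Fintype α] [Nonempty α] {n : ℕ} (t : Fin n)
    (f : List α → ℝ) : 𝔼 z : Fin n → α, f (tr z t) = 𝔼 x : Fin t → α, f (List.ofFn x) := by
  classical
  have hσ : Function.Injective (fun i : Fin t => Fin.castLE t.2.le i) := by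
    intro i j h; simpa using h
  rw [← expect_pl hσ univ]
  have : ∀ (y : Fin n → α) (x : Fin t → α),
      tr (pl (fun i : Fin t => Fin.castLE t.2.le i) univ x y) t = List.ofFn x := by
    intro y x
    rw [tr_fin]
    congr 1
    funext i
    exact pl_mem hσ x y (Finset.mem_univ i)
  simp only [this]
  simp

theorem expect_suffix {α : Type*} [Fintype α] [Nonempty α] (t : ℕ) (τ : List α)
    {f : List α → ℝ} (h0 : ∀ l, 0 ≤ f l) :
    𝔼 x : Fin t → α, f (List.ofFn x ++ τ) ≤
      (Fintype.card α : ℝ) ^ τ.length * 𝔼 x : Fin (t + τ.length) → α, f (List.ofFn x) := by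
  have e : 𝔼 x : Fin (t + τ.length) → α, f (List.ofFn x) =
      𝔼 x : Fin t → α, 𝔼 y : Fin τ.length → α, f (List.ofFn x ++ List.ofFn y) := by
    rw [expect_prod]
    refine (Fintype.expect_equiv (Fin.appendEquiv t τ.length) _ _ ?_).symm
    rintro ⟨x, y⟩
    simp [Fin.appendEquiv, List.ofFn_fin_append]
  rw [e, Finset.mul_expect]
  refine Finset.expect_le_expect fun x _ => ?_
  rw [Fintype.expect_eq_sum_div_card]
  have hc : (0 : ℝ) < (Fintype.card α : ℝ) ^ τ.length := by
    have : 0 < Fintype.card α := Fintype.card_pos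
    positivity
  have hcard : (Fintype.card (Fin τ.length → α) : ℝ) = (Fintype.card α : ℝ) ^ τ.length := by
    simp
  rw [hcard, mul_div_cancel₀ _ hc.ne']
  have := Finset.single_le_sum (f := fun y : Fin τ.length → α => f (List.ofFn x ++ List.ofFn y))
    (s := univ) (fun y _ => h0 _) (Finset.mem_univ (fun i => τ.get i))
  simpa using this

theorem nu_suffix {α : Type*} [Fintype α] [Nonempty α] {M : ℕ} (hM : 0 < M) (τ : List α)
    (hτ : τ.length ≤ M) {f : List α → ℝ} (h0 : ∀ l, 0 ≤ f l) :
    nu M (fun u => f (u ++ τ)) ≤ 2 * (Fintype.card α : ℝ) ^ τ.length * nu (2 * M) f := by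
  unfold nu
  simp only [expect_tr_ofFn, expect_tr_ofFn (f := fun u => f (u ++ τ))]
  have hM' : (0 : ℝ) < M := by exact_mod_cast hM
  let s : ℕ → ℝ := fun t => 𝔼 x : Fin t → α, f (List.ofFn x)
  have hs : ∀ t, 0 ≤ s t := fun t => Finset.expect_nonneg fun x _ => h0 _
  have h1 : 𝔼 t : Fin M, 𝔼 x : Fin t → α, f (List.ofFn x ++ τ) ≤
      𝔼 t : Fin M, (Fintype.card α : ℝ) ^ τ.length * s (t + τ.length) :=
    Finset.expect_le_expect fun t _ => expect_suffix _ τ h0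
  refine h1.trans ?_
  change _ ≤ 2 * (Fintype.card α : ℝ) ^ τ.length * 𝔼 t : Fin (2 * M), s t
  rw [← Finset.mul_expect, mul_comm (2 : ℝ), mul_assoc]
  gcongr
  rw [Fintype.expect_eq_sum_div_card, Fintype.expect_eq_sum_div_card, Fintype.card_fin,
    Fintype.card_fin]
  have h2 : ∑ t : Fin M, s (t + τ.length) ≤ ∑ t : Fin (2 * M), s t := by
    rw [Fin.sum_univ_eq_sum_range (fun i => s (i + τ.length)), Fin.sum_univ_eq_sum_range,
      Finset.range_eq_Ico, Finset.sum_Ico_add']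
    apply Finset.sum_le_sum_of_subset_of_nonneg
    · intro i hi
      simp only [Finset.mem_Ico, Finset.mem_range] at *
      omega
    · intro i _ _; exact hs i
  push_cast
  rw [mul_div_assoc', mul_div_mul_left _ _ (by norm_num : (2:ℝ) ≠ 0)]
  gcongr

theorem expect_updateD {ι : Type*} {β : ι → Type*} [Fintype ι] [∀ i, Fintype (β i)] [DecidableEq ι]
    [∀ i, Nonempty (β i)] (j : ι) (f : (∀ i, β i) → ℝ) :
    𝔼 S : ∀ i, β i, 𝔼 q : β j, f (Function.update S j q) = 𝔼 S, f S := by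
  have h1 : 𝔼 S, f S = 𝔼 S : ∀ i, β i, 𝔼 q : β j, f S := by simp
  rw [h1, expect_prod, expect_prod]
  let ρ : (∀ i, β i) × β j → (∀ i, β i) × β j := fun q => (Function.update q.1 j q.2, q.1 j)
  have hρ : Function.Involutive ρ := by
    rintro ⟨y, x⟩
    simp [ρ]
  exact Fintype.expect_bijective ρ hρ.bijective _ _ (fun _ => rfl)

theorem wext_congr {k : ℕ} {w w' : ℕ → VWord k} (x : List (Fin k))
    (h : ∀ i < x.length, w i = w' i) : wext w x = wext w' x := by
  induction x generalizing w w' with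
  | nil => simp [wext]
  | cons a x ih =>
    simp only [wext]
    rw [h 0 (by simp), ih (fun i hi => h (i + 1) (by simpa using hi))]

theorem subst_rr {k : ℕ} {v : VWord (k + 1)} (hv : some (Fin.last k) ∉ v) (a : Fin k)
    (c : Fin (k + 1)) : subst v (rr a c) = (subst v c).map (rr a) := by
  simp only [subst, List.map_map]
  apply List.map_congr_left
  intro o ho
  cases o with
  | none => simp
  | some b =>
    have : b ≠ Fin.last k := by rintro rfl; exact hv ho
    simp [rr, this]

theorem wext_rr {k : ℕ} {w : ℕ → VWord (k + 1)} (hw : ∀ i, some (Fin.last k) ∉ w i) (a : Fin k)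
    (x : List (Fin (k + 1))) : wext w (x.map (rr a)) = (wext w x).map (rr a) := by
  induction x generalizing w with
  | nil => simp [wext]
  | cons c x ih =>
    simp only [List.map_cons, wext, List.map_append, subst_rr (hw 0), ih (fun i => hw (i + 1))]

theorem hatV_last {k : ℕ} (u : List (Fin (k + 1))) : some (Fin.last k) ∉ hatV u := by
  simp only [hatV, List.mem_map, not_exists, not_and]
  intro c _
  split_ifs with h
  · simp
  · simpa using h

/-- the variable as the last letter -/
def lastV {k : ℕ} (v : VWord k) : List (Fin (k + 1)) :=
  v.map (fun o => o.elim (Fin.last k) Fin.castSucc)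

theorem lastV_rr {k : ℕ} (v : VWord k) (a : Fin k) :
    (lastV v).map (rr a) = (subst v a).map Fin.castSucc := by
  simp only [lastV, subst, List.map_map]
  apply List.map_congr_left
  intro o _
  cases o with
  | none => simp [rr]
  | some b => simp [rr_castSucc]

theorem line_struct {k : ℕ} {w : ℕ → VWord (k + 1)} (hw : ∀ i, some (Fin.last k) ∉ w i)
    (x : List (Fin k)) (v : VWord k) (u : List (Fin (k + 1))) (hu : w x.length = none :: hatV u)
    (a : Fin k) :
    wext w ((x ++ subst (none :: v) a).map Fin.castSucc) =
      wext w (x.map Fin.castSucc) ++ a.castSucc ::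
        (u ++ wext (fun i => w (i + 1 + x.length)) (lastV v)).map (rr a) := by
  rw [subst_cons_none, List.map_append, wext_append, List.map_cons, wext]
  congr 1
  simp only [List.length_map, Nat.zero_add, hu]
  rw [subst_cons_none, subst_hatV, List.map_append, ← wext_rr (fun i => hw _), lastV_rr]
  simp

open Finset BigOperators
set_option linter.all false

theorem exists_levels {good : ℕ → ℕ → Prop} (h : ∀ b, ∃ M, good b M) (m : ℕ) :
    ∃ M : ℕ → ℕ, ∀ i < m, good (∑ s ∈ Finset.Ico (i + 1) m, M s) (M i) := by
  induction m with
  | zero => exact ⟨fun _ => 0, by simp⟩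
  | succ m ih =>
    obtain ⟨M, hM⟩ := ih
    obtain ⟨M0, hM0⟩ := h (∑ s ∈ Finset.range m, M s)
    let M2 : ℕ → ℕ := fun i => Nat.casesOn i M0 M
    have e : ∀ i, ∑ s ∈ Finset.Ico (i + 1) (m + 1), M2 s = ∑ s ∈ Finset.Ico i m, M s := by
      intro i
      rw [← Finset.sum_Ico_add']
    refine ⟨M2, ?_⟩
    intro i hi
    rw [e]
    cases i with
    | zero => rw [Nat.Ico_zero_eq_range]; exact hM0
    | succ i => exact hM i (by omega)

/-- the (finite) sample space of levels -/
abbrev Smp (K m : ℕ) (M : ℕ → ℕ) := ∀ i : Fin m, Fin (M i) × (Fin (M i) → Fin K)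

def wv {k m : ℕ} {M : ℕ → ℕ} (p : Smp (k + 1) m M) (i : ℕ) : VWord (k + 1) :=
  if h : i < m then none :: hatV (tr (p ⟨i, h⟩).2 (p ⟨i, h⟩).1) else [none]

theorem wv_last {k m : ℕ} {M : ℕ → ℕ} (p : Smp (k + 1) m M) (i : ℕ) :
    some (Fin.last k) ∉ wv p i := by
  unfold wv
  split_ifs
  · simp [hatV_last]
  · simp

theorem wv_length {k m : ℕ} {M : ℕ → ℕ} (p : Smp (k + 1) m M) {i : ℕ} (hi : i < m) :
    (wv p i).length ≤ M i := by
  unfold wv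
  rw [dif_pos hi]
  simp only [List.length_cons, hatV, List.length_map, tr_fin_length]
  exact (p ⟨i, hi⟩).1.2

theorem wv_update_ne {k m : ℕ} {M : ℕ → ℕ} (p : Smp (k + 1) m M) (j : Fin m) (q) {i : ℕ}
    (hi : i ≠ j) : wv (Function.update p j q) i = wv p i := by
  unfold wv
  split_ifs with h
  · rw [Function.update_of_ne]
    rintro rfl; exact hi rfl
  · rfl

theorem wv_update_self {k m : ℕ} {M : ℕ → ℕ} (p : Smp (k + 1) m M) (j : Fin m) (q) :
    wv (Function.update p j q) j = none :: hatV (tr q.2 q.1) := by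
  unfold wv
  rw [dif_pos j.2]
  simp

def LineIn {k : ℕ} (A : Set (List (Fin (k + 1)))) (w : ℕ → VWord (k + 1)) (x : List (Fin k))
    (v : VWord k) : Prop :=
  wext w (x.map Fin.castSucc) ∈ A ∧
    ∀ a, wext w ((x ++ subst (none :: v) a).map Fin.castSucc) ∈ A

open Classical in
theorem abstract_step {k : ℕ} [NeZero k] (had : ∀ d, AD k d) {δ : ℝ} (hδ : 0 < δ)
    (hP : ∀ γ > 0, PP (k + 1) (δ + γ)) :
    ∃ T : ℕ, 0 < T ∧ ∃ ε : ℝ, 0 < ε ∧ ∀ (Ω : Type) [Fintype Ω] [Nonempty Ω]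
      (A : Ω → Set (List (Fin (k + 1)))), (∀ ω, ¬ HasTree 2 (A ω)) →
      ¬ ∀ l, l.length < T → δ - ε ≤ 𝔼 ω, ind (A ω) l := by
  obtain ⟨m, hm, hm2⟩ := had 2 (δ / 4) (by positivity)
  haveI : NeZero m := ⟨hm.ne'⟩
  have hfin : ({q : List (Fin k) × VWord k | q.1.length + 1 + q.2.length < m}).Finite := by
    refine Set.Finite.subset ((List.finite_length_lt (Fin k) m).prod
      (List.finite_length_lt (Option (Fin k)) m)) ?_
    rintro ⟨x, v⟩ h
    simp only [Set.mem_setOf_eq, Set.mem_prod] at *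
    omega
  let Λ := hfin.toFinset
  have hΛ : ∀ x v, (x, v) ∈ Λ ↔ x.length + 1 + v.length < m := by
    intro x v; simp [Λ]
  set θ : ℝ := δ / (4 * (#Λ + 1)) with hθ
  have hθ0 : 0 < θ := by positivity
  have hΛθ : #Λ * θ ≤ δ / 4 := by
    rw [hθ, mul_div_assoc', div_le_div_iff₀ (by positivity) (by norm_num)]
    nlinarith
  set K : ℝ := ((k + 1 : ℕ) : ℝ) with hK
  have hK1 : 1 ≤ K := by rw [hK]; push_cast; linarith [(Nat.cast_nonneg k : (0:ℝ) ≤ k)]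
  obtain ⟨M, hM⟩ := exists_levels (fun b => local_step had hδ hP
    (ξ := δ * θ / (4 * K ^ b)) (by positivity) b) m
  set b : ℕ := ∑ s ∈ Finset.range m, M s with hb
  refine ⟨3 * b + 2, by omega, min (δ * θ / (4 * K ^ b)) (δ / 8), by positivity, ?_⟩
  intro Ω _ _ A hA hcon
  set ε := min (δ * θ / (4 * K ^ b)) (δ / 8) with hε
  have hε1 : ε ≤ δ * θ / (4 * K ^ b) := min_le_left _ _
  have hε2 : ε ≤ δ / 8 := min_le_right _ _
  haveI hMne : ∀ i : Fin m, NeZero (M i) := fun i => ⟨(hM i i.2).1.ne'⟩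
  haveI hne : ∀ i : Fin m, Nonempty (Fin (M i) × (Fin (M i) → Fin (k + 1))) := fun i => inferInstance
  have hlen : ∀ (p : Smp (k + 1) m M) (x : List (Fin (k + 1))), x.length ≤ m →
      (wext (wv p) x).length ≤ b := by
    intro p x hx
    rw [wext_length]
    calc _ ≤ ∑ i ∈ Finset.range x.length, M i := by
          refine Finset.sum_le_sum fun i hi => ?_
          rw [Finset.mem_range] at hi
          exact wv_length p (by omega)
      _ ≤ b := Finset.sum_le_sum_of_subset (by simpa using hx)
  let I : Ω → Smp (k + 1) m M → (List (Fin k) × VWord k) → ℝ := fun ω p q =>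
    if LineIn (A ω) (wv p) q.1 q.2 then 1 else 0
  -- each line is rare
  have hline : ∀ q ∈ Λ, 𝔼 p, 𝔼 ω, I ω p q ≤ θ := by
    rintro ⟨x, v⟩ hq
    rw [hΛ] at hq
    let j : Fin m := ⟨x.length, by omega⟩
    rw [← expect_updateD j]
    refine Finset.expect_le univ_nonempty fun p _ => ?_
    rw [Finset.expect_comm]
    obtain ⟨hM0, hMb, hMA⟩ := hM j j.2
    set bj := ∑ s ∈ Finset.Ico ((j : ℕ) + 1) m, M s with hbj
    have hbjb : bj ≤ b := Finset.sum_le_sum_of_subset (fun i => by simp)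
    set x0 := wext (wv p) (x.map Fin.castSucc) with hx0
    set τ := wext (fun i => wv p (i + 1 + x.length)) (lastV v) with hτ
    have hτl : τ.length ≤ bj := by
      rw [hτ, wext_length]
      have hvl : (lastV v).length = v.length := by simp [lastV]
      rw [hvl]
      calc _ ≤ ∑ i ∈ Finset.range v.length, M (i + 1 + x.length) := by
            refine Finset.sum_le_sum fun i hi => ?_
            rw [Finset.mem_range] at hi
            exact wv_length p (by omega)
        _ = ∑ i ∈ Finset.Ico (0 + (1 + x.length)) (v.length + (1 + x.length)), M i := by
            rw [← Finset.sum_Ico_add', Finset.range_eq_Ico]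
            simp only [add_assoc]
        _ ≤ bj := by
            apply Finset.sum_le_sum_of_subset
            intro i
            simp only [Finset.mem_Ico, j]
            omega
    have hI : ∀ ω q, I ω (Function.update p j q) (x, v) ≤
        ind (A ω) x0 * ind (DD (A ω) x0) (tr q.2 q.1 ++ τ) := by
      intro ω q
      simp only [I]
      split_ifs with h
      · have ex0 : wext (wv (Function.update p j q)) (x.map Fin.castSucc) = x0 := by
          apply wext_congr
          intro i hi
          rw [List.length_map] at hi
          exact wv_update_ne p j q (by simp only [j]; omega)
        have eτ : wext (fun i => wv (Function.update p j q) (i + 1 + x.length)) (lastV v) = τ := by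
          apply wext_congr
          intro i hi
          exact wv_update_ne p j q (by simp only [j]; omega)
        have h1 := h.1
        rw [ex0] at h1
        have h2 : tr q.2 q.1 ++ τ ∈ DD (A ω) x0 := by
          intro a
          have := h.2 a
          rw [line_struct (wv_last _) x v (tr q.2 q.1) (wv_update_self p j q), ex0, eτ] at this
          exact this
        rw [ind_of_mem h1, ind_of_mem h2]; norm_num
      · exact mul_nonneg (ind_nonneg _ _) (ind_nonneg _ _)
    have h1 : ∀ ω, 𝔼 q, I ω (Function.update p j q) (x, v) ≤
        2 * K ^ bj * (ind (A ω) x0 * nu (2 * M j) (ind (DD (A ω) x0))) := by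
      intro ω
      have e1 : 𝔼 q, I ω (Function.update p j q) (x, v) ≤
          ind (A ω) x0 * nu (M j) (fun u => ind (DD (A ω) x0) (u ++ τ)) := by
        unfold nu
        rw [expect_prod, Finset.mul_expect]
        exact Finset.expect_le_expect fun q _ => hI ω q
      have e2 := nu_suffix hM0 τ (hτl.trans hMb) (f := ind (DD (A ω) x0)) (ind_nonneg _)
      rw [Fintype.card_fin, ← hK] at e2
      have e3 : 2 * K ^ τ.length * nu (2 * M j) (ind (DD (A ω) x0)) ≤
          2 * K ^ bj * nu (2 * M j) (ind (DD (A ω) x0)) := by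
        have : 0 ≤ nu (2 * M j) (ind (DD (A ω) x0)) := nu_nonneg fun l => ind_nonneg _ _
        gcongr
      calc _ ≤ _ := e1
        _ ≤ ind (A ω) x0 * (2 * K ^ bj * nu (2 * M j) (ind (DD (A ω) x0))) :=
            mul_le_mul_of_nonneg_left (e2.trans e3) (ind_nonneg _ _)
        _ = _ := by ring
    have h2 := Finset.expect_le_expect (s := univ) (fun ω (_ : ω ∈ univ) => hMA (A ω) (hA ω) x0)
    rw [Finset.expect_add_distrib, Fintype.expect_const, ← Finset.mul_expect] at h2
    have h3 : δ - ε ≤ 𝔼 ω, nu (2 * M j) (fun z => ind (A ω) (x0 ++ Fin.last k :: z)) := by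
      rw [← nu_expect]
      haveI : NeZero (2 * M j) := ⟨by omega⟩
      rw [← nu_const (α := Fin (k + 1)) (n := 2 * M j) (δ - ε)]
      apply nu_mono'
      intro l hl
      apply hcon
      have h4 := hlen p (x.map Fin.castSucc) (by simp; omega)
      rw [← hx0] at h4
      have h5 : M j ≤ b := Finset.single_le_sum (f := M) (fun _ _ => Nat.zero_le _)
        (Finset.mem_range.2 j.2)
      simp only [List.length_append, List.length_cons]
      omega
    have h6 : 𝔼 ω, 𝔼 q, I ω (Function.update p j q) (x, v) ≤
        2 * K ^ bj * 𝔼 ω, (ind (A ω) x0 * nu (2 * M j) (ind (DD (A ω) x0))) := by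
      rw [Finset.mul_expect]
      exact Finset.expect_le_expect fun ω _ => h1 ω
    refine h6.trans ?_
    set X := 𝔼 ω, (ind (A ω) x0 * nu (2 * M j) (ind (DD (A ω) x0)))
    have h7 : ε ≤ δ * θ / (4 * K ^ bj) := by
      refine hε1.trans ?_
      gcongr
    have h8 : δ * X ≤ 2 * (δ * θ / (4 * K ^ bj)) := by linarith
    have hKp : 0 < K ^ bj := by positivity
    have h9 : 2 * (δ * θ / (4 * K ^ bj)) = δ * (θ / (2 * K ^ bj)) := by field_simp; norm_num
    rw [h9] at h8
    have h10 : X ≤ θ / (2 * K ^ bj) := le_of_mul_le_mul_left h8 hδ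
    rw [le_div_iff₀ (by positivity)] at h10
    linarith
  -- density of the pulled back sets
  have hpt : ∀ p ω, nu m (fun l : List (Fin k) => ind (A ω) (wext (wv p) (l.map Fin.castSucc))) ≤
      δ / 4 + ∑ q ∈ Λ, I ω p q := by
    intro p ω
    let B : Set (List (Fin k)) := {l | l.length < m ∧ wext (wv p) (l.map Fin.castSucc) ∈ A ω}
    have eB : nu m (fun l : List (Fin k) => ind (A ω) (wext (wv p) (l.map Fin.castSucc))) =
        nu m (ind B) := by
      apply nu_congr'
      intro l hl
      by_cases h : wext (wv p) (l.map Fin.castSucc) ∈ A ω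
      · rw [ind_of_mem h, ind_of_mem (show l ∈ B from ⟨hl, h⟩)]
      · rw [ind_of_notMem h, ind_of_notMem (show l ∉ B from fun h' => h h'.2)]
    rw [eB]
    have hI0 : ∀ q ∈ Λ, 0 ≤ I ω p q := fun q _ => by
      simp only [I]; split_ifs <;> norm_num
    by_cases hd : δ / 4 ≤ nu m (ind B)
    · obtain ⟨x, v, hx, hv⟩ := (hm2 B hd).line
      have hmem : (x, v) ∈ Λ := by
        rw [hΛ]
        have := (hv 0).1
        simp only [List.length_append, subst_length, List.length_cons] at this
        omega
      have h1 := Finset.single_le_sum hI0 hmem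
      have h2 : I ω p (x, v) = 1 := if_pos ⟨hx.2, fun a => (hv a).2⟩
      have h3 : nu m (ind B) ≤ 1 := nu_le_one (ind_le_one B)
      linarith
    · have := Finset.sum_nonneg hI0
      linarith
  have h1 := Finset.expect_le_expect (s := univ) (fun p (_ : p ∈ univ) =>
    Finset.expect_le_expect (s := univ) (fun ω (_ : ω ∈ univ) => hpt p ω))
  simp only [Finset.expect_add_distrib, Fintype.expect_const] at h1
  have h2 : 𝔼 p, 𝔼 ω, ∑ q ∈ Λ, I ω p q ≤ δ / 4 := by
    have e : 𝔼 p, 𝔼 ω, ∑ q ∈ Λ, I ω p q = ∑ q ∈ Λ, 𝔼 p, 𝔼 ω, I ω p q := by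
      rw [← Finset.expect_sum_comm]
      refine Finset.expect_congr rfl fun p _ => ?_
      rw [← Finset.expect_sum_comm]
    rw [e]
    refine (Finset.sum_le_card_nsmul _ _ _ hline).trans ?_
    rw [nsmul_eq_mul]; exact hΛθ
  have h3 : δ - ε ≤ 𝔼 p : Smp (k + 1) m M, 𝔼 ω,
      nu m (fun l : List (Fin k) => ind (A ω) (wext (wv p) (l.map Fin.castSucc))) := by
    refine Finset.le_expect univ_nonempty fun p _ => ?_
    rw [← nu_expect, ← nu_const (α := Fin k) (n := m) (δ - ε)]
    apply nu_mono'
    intro l hl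
    apply hcon
    have := hlen p (l.map Fin.castSucc) (by simp; omega)
    omega
  linarith

open Finset BigOperators
set_option linter.all false

theorem main_step {k : ℕ} [NeZero k] (had : ∀ d, AD k d) {δ : ℝ} (hδ : 0 < δ)
    (hP : ∀ γ > 0, PP (k + 1) (δ + γ)) : ∃ η > 0, PP (k + 1) (δ - η) := by
  obtain ⟨T, hT, ε, hε, h⟩ := abstract_step had hδ hP
  haveI : NeZero T := ⟨hT.ne'⟩
  have hT' : (0 : ℝ) < T := by exact_mod_cast hT
  set η : ℝ := ε / (4 * T) with hη
  have hη0 : 0 < η := by positivity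
  set η' : ℝ := ε / (2 * T) with hη'
  have hη'0 : 0 < η' := by positivity
  obtain ⟨N, hN, hN2⟩ := hP η hη0
  haveI : NeZero N := ⟨hN.ne'⟩
  have hN1 : (1 : ℝ) ≤ N := by exact_mod_cast hN
  obtain ⟨r, hr⟩ := exists_nat_gt (((k + 1 : ℕ) : ℝ) / η' ^ 2)
  have hr0 : (0 : ℝ) < r := lt_trans (by positivity) hr
  haveI : NeZero r := ⟨by rintro rfl; simp at hr0⟩
  have hn : ((k + 1 : ℕ) : ℝ) ≤ η' ^ 2 * ((r * N : ℕ) : ℝ) := by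
    rw [div_lt_iff₀ (by positivity)] at hr
    push_cast at hr ⊢
    have : (r : ℝ) ≤ r * N := by nlinarith
    nlinarith [pow_pos hη'0 2]
  refine ⟨η, hη0, T * (r * N), Nat.pos_of_ne_zero (NeZero.ne _), ?_⟩
  intro A hA
  by_contra hno
  have hup : ∀ j : Fin T, 𝔼 q : Fin (r * N), 𝔼 y : Fin (T * (r * N)) → Fin (k + 1),
      ind A (tr y (pos j q)) ≤ δ + η := by
    intro j
    refine win_le (pos_strictMono j) (nu_mul_le' ?_)
    intro Φ hΦ
    by_contra hc
    exact hno ((hN2 {l | Φ l ∈ A} (not_le.1 hc).le).comp hΦ)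
  set β : Fin T → ℝ := fun j => 𝔼 q : Fin (r * N), 𝔼 y : Fin (T * (r * N)) → Fin (k + 1),
      ind A (tr y (pos j q)) with hβ
  have hlow : ∀ j, δ - ε / 2 ≤ β j := by
    intro j
    have e : nu (T * (r * N)) (ind A) = 𝔼 j, β j := by
      unfold nu; rw [expect_blk]
    rw [e, Fintype.expect_eq_sum_div_card, Fintype.card_fin, le_div_iff₀ hT'] at hA
    rw [← Finset.add_sum_erase univ β (Finset.mem_univ j)] at hA
    have h1 := Finset.sum_le_card_nsmul (univ.erase j) β (δ + η) (fun i _ => hup i)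
    rw [Finset.card_erase_of_mem (Finset.mem_univ j), Finset.card_univ, Fintype.card_fin,
      nsmul_eq_mul, Nat.cast_sub hT, Nat.cast_one] at h1
    have h2 : η * T = ε / 4 := by rw [hη]; field_simp
    nlinarith
  refine h ((Fin T → Fin (r * N)) × (Fin (T * (r * N)) → Fin (k + 1)))
    (fun ω => {l | emb (fun b => pos b (ω.1 b)) ω.2 l ∈ A})
    (fun ω hc => hno (hc.comp (isEmb_emb _ _))) ?_
  intro l hl
  obtain ⟨x, hx⟩ := exists_tr_of_length l hl
  have h1 := plant hη'0 hn (ind_nonneg A) (ind_le_one A) x ⟨l.length, hl⟩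
  rw [hx] at h1
  have h4 := expect_prod (fun (S : Fin T → Fin (r * N)) (y : Fin (T * (r * N)) → Fin (k + 1)) =>
    ind A (emb (fun b => pos b (S b)) y l))
  have h5 := h1.trans_eq h4
  have h2 := hlow ⟨l.length, hl⟩
  have h3 : T * η' = ε / 2 := by rw [hη']; field_simp
  simp only [hβ] at h2
  refine le_trans ?_ h5
  linarith

theorem PP.mono {K : ℕ} {δ δ' : ℝ} (h : PP K δ) (hd : δ ≤ δ') : PP K δ' := by
  obtain ⟨n, hn, h⟩ := h
  exact ⟨n, hn, fun A hA => h A (hd.trans hA)⟩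

theorem AD_succ_two {k : ℕ} [NeZero k] (had : ∀ d, AD k d) : AD (k + 1) 2 := by
  intro δ hδ
  by_contra hc
  have hc : ¬ PP (k + 1) δ := hc
  have h2 : PP (k + 1) 2 := by
    refine ⟨1, one_pos, fun A hA => ?_⟩
    have := nu_le_one (n := 1) (ind_le_one A)
    linarith
  set S : Set ℝ := {x | ¬ PP (k + 1) x} with hS
  have hbdd : BddAbove S := ⟨2, fun x hx => by
    by_contra hlt; exact hx (h2.mono (not_le.1 hlt).le)⟩
  have hδ0 : δ ≤ sSup S := le_csSup hbdd hc
  obtain ⟨η, hη, hP⟩ := main_step had (lt_of_lt_of_le hδ hδ0) (fun γ hγ => by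
    by_contra hx
    have := le_csSup hbdd (show sSup S + γ ∈ S from hx)
    linarith)
  obtain ⟨x, hx, hlt⟩ := exists_lt_of_lt_csSup ⟨δ, hc⟩ (show sSup S - η < sSup S by linarith)
  exact hx (hP.mono hlt.le)

theorem HasTree.mono {K d e : ℕ} {A : Set (List (Fin K))} (h : HasTree d A) (hde : e ≤ d) :
    HasTree e A := by
  obtain ⟨Φ, hΦ, h⟩ := h
  exact ⟨Φ, hΦ, fun x hx => h x (by omega)⟩

theorem expect_append {α : Type*} [Fintype α] (s t : ℕ) (f : List α → ℝ) :
    𝔼 x : Fin (s + t) → α, f (List.ofFn x) =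
      𝔼 x : Fin s → α, 𝔼 y : Fin t → α, f (List.ofFn x ++ List.ofFn y) := by
  rw [expect_prod]
  refine (Fintype.expect_equiv (Fin.appendEquiv s t) _ _ ?_).symm
  rintro ⟨x, y⟩
  simp [Fin.appendEquiv, List.ofFn_fin_append]

theorem nu_pre_append {α : Type*} [Fintype α] [Nonempty α] (m n : ℕ) (f : List α → ℝ) :
    nu (m * n) f = 𝔼 b : Fin m, 𝔼 x : Fin (n * b) → α, nu n (fun l => f (List.ofFn x ++ l)) := by
  unfold nu
  rw [expect_blk]
  refine Finset.expect_congr rfl fun b _ => ?_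
  have e1 : 𝔼 x : Fin (n * b) → α, 𝔼 t : Fin n, 𝔼 z : Fin n → α, f (List.ofFn x ++ tr z t) =
      𝔼 t : Fin n, 𝔼 x : Fin (n * b) → α, 𝔼 z : Fin n → α, f (List.ofFn x ++ tr z t) :=
    Finset.expect_comm _ _ _
  refine Eq.trans ?_ e1.symm
  refine Finset.expect_congr rfl fun q _ => ?_
  have e2 := expect_tr_ofFn (pos b q) f
  have e3 : 𝔼 x : Fin (pos b q : ℕ) → α, f (List.ofFn x) =
      𝔼 x : Fin (n * b + q) → α, f (List.ofFn x) :=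
    congrArg (fun t : ℕ => 𝔼 x : Fin t → α, f (List.ofFn x)) ((pos_val b q).trans (add_comm _ _))
  refine e2.trans (e3.trans ((expect_append _ _ f).trans ?_))
  refine Finset.expect_congr rfl fun x _ => ?_
  exact (expect_tr_ofFn q (fun l => f (List.ofFn x ++ l))).symm

open Classical in
theorem AD_step {k e : ℕ} [NeZero k] (h2 : AD k 2) (he : AD k (e + 1)) : AD k (e + 2) := by
  intro δ hδ
  obtain ⟨n1, hn1, h1⟩ := he (δ / 2) (by positivity)
  haveI : NeZero n1 := ⟨hn1.ne'⟩
  have hn1' : (0 : ℝ) < n1 := by exact_mod_cast hn1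
  have hk' : (0 : ℝ) < k := by exact_mod_cast NeZero.pos k
  set C : ℝ := (n1 : ℝ) * (k : ℝ) ^ n1 with hC
  have hC0 : 0 < C := by positivity
  let S := {v : VWord k // v.length < n1 ∧ IsLeftVar v}
  haveI : Finite S := Set.Finite.to_subtype
    ((List.finite_length_lt (Option (Fin k)) n1).subset (fun v hv => hv.1))
  haveI : Fintype S := Fintype.ofFinite S
  let pat : (Fin e → S) → ℕ → VWord k := fun f i => if h : i < e then (f ⟨i, h⟩).1 else [none]
  have hpat : ∀ f i, IsLeftVar (pat f i) := by
    intro f i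
    simp only [pat]
    split_ifs
    · exact (f _).2.2
    · rfl
  set δ' : ℝ := δ / (4 * C * (Fintype.card (Fin e → S) + 1)) with hδ'
  have hδ'0 : 0 < δ' := by positivity
  obtain ⟨n2, hn2, h2⟩ := h2 δ' hδ'0
  haveI : NeZero n2 := ⟨hn2.ne'⟩
  refine ⟨n2 * n1, by positivity, fun A hA => ?_⟩
  let B : (Fin e → S) → Set (List (Fin k)) := fun f =>
    {x | ∀ l : List (Fin k), l.length < e + 1 → x ++ wext (pat f) l ∈ A}
  by_cases hB : ∃ f, HasTree 2 (B f)
  · obtain ⟨f, hf⟩ := hB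
    obtain ⟨x, v, hx, hv⟩ := hf.line
    refine ⟨fun l => x ++ wext (fun i => Nat.casesOn i (none :: v) (pat f)) l,
      ⟨x, _, ?_, fun l => rfl⟩, ?_⟩
    · intro i
      cases i with
      | zero => rfl
      | succ i => exact hpat f i
    · intro l hl
      cases l with
      | nil => simpa [wext] using hx [] (by simp)
      | cons a l =>
        have := hv a l (by simpa using hl)
        simpa [wext, List.append_assoc] using this
  exfalso
  push Not at hB
  have hle : ∀ f, nu (n2 * n1) (ind (B f)) ≤ δ' := by
    intro f
    rw [mul_comm]
    refine nu_mul_le (f := ind (B f)) ?_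
    intro Φ hΦ
    by_contra hc
    exact hB f ((h2 {l | Φ l ∈ B f} (not_le.1 hc).le).comp hΦ)
  have hpt : ∀ x : List (Fin k), nu n1 (fun l => ind A (x ++ l)) ≤
      δ / 2 + C * ∑ f, nu n1 (fun l => ind (B f) (x ++ l)) := by
    intro x
    have hnn : ∀ f ∈ (univ : Finset (Fin e → S)), 0 ≤ nu n1 (fun l => ind (B f) (x ++ l)) :=
      fun f _ => nu_nonneg fun l => ind_nonneg _ _
    let D : Set (List (Fin k)) := {l | l.length < n1 ∧ x ++ l ∈ A}
    have eD : nu n1 (fun l => ind A (x ++ l)) = nu n1 (ind D) := by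
      apply nu_congr'
      intro l hl
      by_cases h : x ++ l ∈ A
      · rw [ind_of_mem h, ind_of_mem (show l ∈ D from ⟨hl, h⟩)]
      · rw [ind_of_notMem h, ind_of_notMem (show l ∉ D from fun h' => h h'.2)]
    rw [eD]
    by_cases hd : δ / 2 ≤ nu n1 (ind D)
    · obtain ⟨Φ, ⟨c, w, hw, hΦ⟩, hD⟩ := h1 D hd
      have hwl : ∀ i < e, (w i).length < n1 := by
        intro i hi
        have h3 := (hD (List.replicate (i + 1) 0) (by simp; omega)).1
        rw [hΦ, List.length_append, wext_length, List.length_replicate, Finset.sum_range_succ] at h3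
        omega
      let f : Fin e → S := fun i => ⟨w i, hwl i i.2, hw i⟩
      have hc : x ++ c ∈ B f := by
        intro l hl
        have h3 := (hD l hl).2
        rw [hΦ] at h3
        have : wext (pat f) l = wext w l := by
          apply wext_congr
          intro i hi
          simp only [pat, f]
          rw [dif_pos (by omega)]
        rw [this, List.append_assoc]
        exact h3
      have hcl : c.length < n1 := by
        have h3 := (hD [] (by simp)).1
        rw [hΦ] at h3
        simpa [wext] using h3
      have h4 : 1 / C ≤ nu n1 (fun l => ind (B f) (x ++ l)) := by
        have h5 := le_nu_point (α := Fin k) c hcl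
        rw [Fintype.card_fin] at h5
        refine h5.trans (nu_mono fun l => ?_)
        split_ifs with hlc
        · rw [hlc, ind_of_mem hc]
        · exact ind_nonneg _ _
      have h5 := Finset.single_le_sum hnn (Finset.mem_univ f)
      have h6 : 1 ≤ C * ∑ f, nu n1 (fun l => ind (B f) (x ++ l)) := by
        rw [div_le_iff₀ hC0] at h4
        nlinarith
      have h7 : nu n1 (ind D) ≤ 1 := nu_le_one (ind_le_one D)
      linarith
    · have := mul_nonneg hC0.le (Finset.sum_nonneg hnn)
      linarith
  have h3 : nu (n2 * n1) (ind A) ≤ δ / 2 + C * ∑ f, nu (n2 * n1) (ind (B f)) := by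
    rw [nu_pre_append]
    simp only [nu_pre_append n2 n1 (ind (B _))]
    rw [← Finset.expect_sum_comm]
    simp only [← Finset.expect_sum_comm]
    rw [Finset.mul_expect]
    have hc : δ / 2 = 𝔼 b : Fin n2, δ / 2 := by simp
    conv_rhs => rw [hc]
    rw [← Finset.expect_add_distrib]
    refine Finset.expect_le_expect fun b _ => ?_
    rw [Finset.mul_expect]
    have hc : δ / 2 = 𝔼 x : Fin (n1 * b) → Fin k, δ / 2 := by simp
    conv_rhs => rw [hc]
    rw [← Finset.expect_add_distrib]
    exact Finset.expect_le_expect fun x _ => hpt _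
  have h4 : ∑ f, nu (n2 * n1) (ind (B f)) ≤ Fintype.card (Fin e → S) * δ' := by
    refine (Finset.sum_le_card_nsmul _ _ _ (fun f _ => hle f)).trans ?_
    rw [nsmul_eq_mul, Finset.card_univ]
  have h5 : C * (Fintype.card (Fin e → S) * δ') < δ / 2 := by
    rw [hδ', mul_div_assoc', mul_div_assoc', div_lt_div_iff₀ (by positivity) (by norm_num)]
    have : (0:ℝ) ≤ Fintype.card (Fin e → S) := by positivity
    have : 0 < C * δ := by positivity
    nlinarith
  have h6 := mul_le_mul_of_nonneg_left h4 hC0.le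
  linarith

theorem AD_all {k : ℕ} [NeZero k] (h2 : AD k 2) : ∀ d, AD k d := by
  have h : ∀ e, AD k (e + 1) := by
    intro e
    induction e with
    | zero =>
      intro δ hδ
      obtain ⟨n, hn, h⟩ := h2 δ hδ
      exact ⟨n, hn, fun A hA => (h A hA).mono (by omega)⟩
    | succ e ih => exact AD_step h2 ih
  intro d δ hδ
  obtain ⟨n, hn, h⟩ := h d δ hδ
  exact ⟨n, hn, fun A hA => (h A hA).mono (by omega)⟩

open Classical in
theorem AD_one_two : AD 1 2 := by
  intro δ hδ
  obtain ⟨n, hn⟩ := exists_nat_gt (1 / δ)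
  have hn0 : (0 : ℝ) < n := lt_trans (by positivity) hn
  refine ⟨n, by exact_mod_cast hn0, fun A hA => ?_⟩
  by_contra hno
  have key : ∀ t t' : ℕ, t < t' → List.replicate t (0 : Fin 1) ∈ A →
      List.replicate t' (0 : Fin 1) ∈ A → False := by
    intro t t' h ht ht'
    apply hno
    refine hasTree_two (v := List.replicate (t' - t) none) ?_ ht ?_
    · obtain ⟨s, hs⟩ : ∃ s, t' - t = s + 1 := ⟨t' - t - 1, by omega⟩
      rw [hs]; rfl
    · intro a
      have ha : a = 0 := Subsingleton.elim _ _
      have : List.replicate t (0 : Fin 1) ++ subst (List.replicate (t' - t) none) a =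
          List.replicate t' 0 := by
        rw [ha]
        simp only [subst, List.map_replicate, Option.getD_none, List.replicate_append_replicate]
        congr 1; omega
      rw [this]; exact ht'
  have hr : ∀ l : List (Fin 1), l = List.replicate l.length 0 := by
    intro l
    rw [List.eq_replicate_iff]
    exact ⟨rfl, fun b _ => Subsingleton.elim _ _⟩
  have e : nu n (ind A) = 𝔼 t : Fin n, if List.replicate (t : ℕ) (0 : Fin 1) ∈ A then (1 : ℝ) else 0 := by
    unfold nu
    refine Finset.expect_congr rfl fun t _ => ?_
    have : ∀ z : Fin n → Fin 1, ind A (tr z t) =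
        if List.replicate (t : ℕ) (0 : Fin 1) ∈ A then (1 : ℝ) else 0 := by
      intro z
      rw [hr (tr z t), tr_fin_length]
      rfl
    simp only [this]
    simp
  rw [e, Fintype.expect_eq_sum_div_card, Fintype.card_fin, le_div_iff₀ hn0, Finset.sum_boole] at hA
  have hcard : #{t : Fin n | List.replicate (t : ℕ) (0 : Fin 1) ∈ A} ≤ 1 := by
    rw [Finset.card_le_one]
    intro a ha b hb
    simp only [Finset.mem_filter, Finset.mem_univ, true_and] at ha hb
    rcases lt_trichotomy a b with h | h | h
    · exact (key a b h ha hb).elim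
    · exact h
    · exact (key b a h hb ha).elim
  have hcard' : ((#{t : Fin n | List.replicate (t : ℕ) (0 : Fin 1) ∈ A} : ℕ) : ℝ) ≤ 1 := by
    exact_mod_cast hcard
  rw [div_lt_iff₀ hδ] at hn
  linarith

theorem AD_main (k : ℕ) : ∀ d, AD (k + 1) d := by
  induction k with
  | zero => exact AD_all AD_one_two
  | succ k ih => exact AD_all (AD_succ_two ih)

theorem wext_range {k : ℕ} (w : ℕ → VWord k) (a : ℕ → Fin k) (N : ℕ) :
    wext w ((List.range N).map a) = ((List.range N).map fun i => subst (w i) (a i)).flatten := by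
  induction N generalizing w a with
  | zero => simp [wext]
  | succ N ih =>
    rw [List.range_succ_eq_map]
    simp only [List.map_cons, List.map_map, wext, List.flatten_cons]
    congr 1
    exact ih (fun i => w (i + 1)) (fun i => a (i + 1))

open Classical in
theorem dens_eq {k : ℕ} [NeZero k] (A : Set (List (Fin k))) (n : ℕ) {δ : ℝ}
    (h : δ * (k : ℝ) ^ n ≤ (Set.ncard {x ∈ A | x.length = n} : ℝ)) :
    δ ≤ 𝔼 x : Fin n → Fin k, ind A (List.ofFn x) := by
  have hk' : (0 : ℝ) < k := by exact_mod_cast NeZero.pos k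
  have e : 𝔼 x : Fin n → Fin k, ind A (List.ofFn x) =
      (Set.ncard {x ∈ A | x.length = n} : ℝ) / (k : ℝ) ^ n := by
    rw [Fintype.expect_eq_sum_div_card]
    simp only [Fintype.card_fun, Fintype.card_fin]
    push_cast
    congr 1
    have e1 : ∀ x : Fin n → Fin k, ind A (List.ofFn x) = if List.ofFn x ∈ A then (1 : ℝ) else 0 :=
      fun x => rfl
    simp only [e1]
    rw [Finset.sum_boole]
    have e2 : {x ∈ A | x.length = n} =
        ((univ.filter (fun x : Fin n → Fin k => List.ofFn x ∈ A)).image List.ofFn : Finset _) := by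
      ext l
      simp only [Set.mem_setOf_eq, Finset.coe_image, Set.mem_image, Finset.mem_coe,
        Finset.mem_filter, Finset.mem_univ, true_and]
      constructor
      · rintro ⟨h1, rfl⟩
        exact ⟨l.get, by simpa using h1, by simp⟩
      · rintro ⟨x, hx, rfl⟩
        exact ⟨hx, by simp⟩
    rw [e2, Set.ncard_coe_finset, Finset.card_image_of_injective _ List.ofFn_injective]
  rw [e, le_div_iff₀ (by positivity)]
  exact h

/-- **Theorem B** (finite density Carlson–Simpson theorem). -/
theorem finite_density_carlson_simpson (k m : ℕ) (hk : 2 ≤ k) (hm : 1 ≤ m)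
    (δ : ℝ) (hδ0 : 0 < δ) (hδ1 : δ ≤ 1) :
    ∃ N : ℕ, ∀ L : Finset ℕ, N ≤ L.card → ∀ A : Set (Word k),
      (∀ n ∈ L, δ * (k : ℝ) ^ n ≤ (Set.ncard {x ∈ A | x.length = n} : ℝ)) →
      ∃ (c : Word k) (w : ℕ → VWord k),
        (∀ n < m, IsLeftVar (w n)) ∧ csSet c m w ⊆ A := by
  obtain ⟨k', rfl⟩ : ∃ k', k = k' + 1 := ⟨k - 1, by omega⟩
  obtain ⟨n, hn, h⟩ := AD_main k' (m + 1) (δ / 2) (by positivity)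
  haveI : NeZero n := ⟨hn.ne'⟩
  refine ⟨n, fun L hL A hA => ?_⟩
  obtain ⟨L', hL', hcard⟩ := Finset.exists_subset_card_eq hL
  let Mx := L'.sup id + 1
  let σ : Fin n → Fin Mx := fun i => ⟨L'.orderEmbOfFin hcard i,
    Nat.lt_succ_of_le (Finset.le_sup (f := id) (Finset.orderEmbOfFin_mem L' hcard i))⟩
  have hσ : StrictMono σ := fun i j hij => (L'.orderEmbOfFin hcard).strictMono hij
  have h1 : δ ≤ 𝔼 q, 𝔼 z : Fin Mx → Fin (k' + 1), ind A (tr z (σ q)) := by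
    refine Finset.le_expect univ_nonempty fun q _ => ?_
    rw [expect_tr_ofFn]
    exact dens_eq A _ (hA _ (hL' (Finset.orderEmbOfFin_mem L' hcard q)))
  have hT : HasTree (m + 1) A := by
    by_contra hno
    have h2 := win_le hσ (f := ind A) (s := δ / 2) (fun Φ hΦ => by
      by_contra hc
      exact hno ((h {l | Φ l ∈ A} (not_le.1 hc).le).comp hΦ))
    linarith
  obtain ⟨Φ, ⟨c, w, hw, hΦ⟩, hA'⟩ := hT
  refine ⟨c, w, fun i _ => hw i, ?_⟩
  rintro x (rfl | ⟨i, hi, a, rfl⟩)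
  · have := hA' [] (by simp)
    rw [hΦ] at this
    simpa [wext] using this
  · have := hA' ((List.range (i + 1)).map a) (by simp; omega)
    rw [hΦ, wext_range] at this
    exact this
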